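/- arXiv:1710.05317 — 8 statements merged into one kernel-verified Lean document; each statement's English description precedes it below -/
import Mathlib

section
/- For every h ≥ 2 there exist ε₀ = ε₀(h) > 0 and α = α(h) > 0 with the following property: for every oriented graph H on h vertices that is not 2-colorable, every 0 < ε < ε₀, and every n ≥ n₀(ε) (for some threshold n₀ depending on ε), there exists a tournament T on n vertices which is ε-far from being H-free but contains at most ε^{α·log(1/ε)} · n^h copies of H. -/
/-!
Order the vertices of a tournament. For an ordering `σ` of `V(H)` the graph of backward pairs
(`backGraph`) is not bipartite when `H` is not 2-colourable (`backGraph_not_colorable`), and a copy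
of `H` in an ordered tournament induces an ordering `τ` of `V(H)` together with an embedding of the
graph of backward pairs of `τ` into the one of the tournament.

The tournament has one part for every vertex `i` of `H`; the parts are ordered by `σ` and the blocks
of part `i` are indexed by `x ∈ (ZMod q)^m`. Fix distinct integer labels `c i` and a set `S` of small
integer vectors of a fixed Euclidean length. Block `x` of part `i` and block `y` of part `j` are
joined by backward pairs if `i j` is a backward pair of `H` and `y - x = (c j - c i) a` for some
`a ∈ S`. Choosing the blocks `x + c i • a` for fixed `x` and `a ∈ S` gives copies of `H`. Any two
blocks of such a copy determine `x` and `a`, so a reversed pair of vertices destroys few of these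
copies, and the tournament is far from being `H`-free when `S` is dense.

To bound the number of copies, take `σ` so that its graph of backward pairs is minimal in the
homomorphism preorder. The part map of any copy is a homomorphism to this graph, and minimality
allows a fixed cycle in its core to be lifted to the copy. The labels `c` are chosen to increase
along every lift (`exists_scheme`). Adding up the relations `y - x = (c j - c i) a` around the lifted
cycle then gives a convex equation between vectors of equal length, so all of these vectors coincide
(`sphere_rigid`, `cycle_rigid`), and two vertices of the cycle determine the block vector of a third
one. This saves a factor of order `q ^ m` over the trivial bound on the number of copies
(`construction`).

With `r = 2 ^ m`, `q = 2 ^ O(1) * r` and `S` the most popular sphere in `[0, r) ^ m`, the density of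
`S` in `(ZMod q) ^ m` is `2 ^ (-O(m))`, while `q ^ m ≥ 2 ^ (m ^ 2)`. Taking `m` proportional to
`log (1 / ε)` gives the theorem.
-/

def IsOrientedGraph {V : Type*} (E : V → V → Prop) : Prop :=
  ∀ x y, E x y → x ≠ y ∧ ¬ E y x

def IsTournament {V : Type*} (E : V → V → Prop) : Prop :=
  (∀ x, ¬ E x x) ∧ ∀ x y : V, x ≠ y → (E x y ↔ ¬ E y x)

def AcyclicOn {V : Type*} (E : V → V → Prop) (S : Set V) : Prop :=
  ∀ x, ¬ Relation.TransGen (fun a b => a ∈ S ∧ b ∈ S ∧ E a b) x x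

def KColorable {V : Type*} (E : V → V → Prop) (k : ℕ) : Prop :=
  ∃ c : V → Fin k, ∀ i : Fin k, AcyclicOn E {v | c v = i}

def HasCopy {U V : Type*} (EH : U → U → Prop) (ET : V → V → Prop) : Prop :=
  ∃ f : U → V, Function.Injective f ∧ ∀ u v, EH u v → ET (f u) (f v)

noncomputable def copyCount {U V : Type*} (EH : U → U → Prop) (ET : V → V → Prop) : ℕ :=
  Set.ncard {f : U → V | Function.Injective f ∧ ∀ u v, EH u v → ET (f u) (f v)}

def EpsFar {U V : Type*} [Fintype V] (EH : U → U → Prop) (ET : V → V → Prop) (ε : ℝ) : Prop :=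
  ∀ ET' : V → V → Prop, IsTournament ET' →
    ((Set.ncard {p : V × V | ET p.1 p.2 ∧ ET' p.2 p.1} : ℝ) < ε * (Fintype.card V : ℝ) ^ 2) →
    HasCopy EH ET'

/-! ### Graphs of backward pairs and their cores -/

/-- The graph of backward pairs of `E` with respect to the ordering of the vertices by the
values of `σ`: the pairs joined by an edge that goes down in this ordering. -/
def backGraph {V : Type*} (E : V → V → Prop) (σ : V → ℕ) : SimpleGraph V where
  Adj u v := (E u v ∧ σ v < σ u) ∨ (E v u ∧ σ u < σ v)
  symm := ⟨fun _ _ h => h.symm⟩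
  loopless := ⟨fun u h => by rcases h with h | h <;> exact lt_irrefl _ h.2⟩

/-- A proper 2-colouring of the graph of backward pairs is a partition into two sets on which
every edge goes up in the ordering, hence into two acyclic sets. -/
lemma backGraph_not_colorable {V : Type*} {E : V → V → Prop} (hE : ¬ KColorable E 2)
    {σ : V → ℕ} (hσ : Function.Injective σ) (hor : IsOrientedGraph E) :
    ¬ (backGraph E σ).Colorable 2 := by
  rintro ⟨C⟩
  refine hE ⟨C, fun i x hx => ?_⟩
  have key : ∀ x y, Relation.TransGen
      (fun a b => a ∈ {v | C v = i} ∧ b ∈ {v | C v = i} ∧ E a b) x y → σ x < σ y := by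
    have step : ∀ a b, (a ∈ {v | C v = i} ∧ b ∈ {v | C v = i} ∧ E a b) → σ a < σ b := by
      rintro a b ⟨ha, hb, hab⟩
      by_contra hlt
      have hne : σ b ≠ σ a := fun h => (hor a b hab).1 (hσ h).symm
      have hadj : (backGraph E σ).Adj a b := Or.inl ⟨hab, lt_of_le_of_ne (not_lt.mp hlt) hne⟩
      exact C.valid hadj (ha.trans hb.symm)
    intro x y hxy
    induction hxy with
    | single h => exact step _ _ h
    | tail _ h ih => exact ih.trans (step _ _ h)
  exact lt_irrefl _ (key x x hx)

/-- Among finitely many graphs one is minimal in the homomorphism preorder. -/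
lemma exists_hom_minimal {V : Type} [Finite V] (P : SimpleGraph V → Prop) (hP : ∃ B, P B) :
    ∃ B, P B ∧ ∀ B', P B' → Nonempty (B' →g B) → Nonempty (B →g B') := by
  classical
  -- minimise the number of members of the family that map to `B`
  obtain ⟨B, hB, hmin⟩ := Set.exists_min_image {B | P B}
    (fun B => Set.ncard {D | P D ∧ Nonempty (D →g B)}) (Set.toFinite _) hP
  refine ⟨B, hB, fun B' hB' ⟨f⟩ => ?_⟩
  have hsub : {D | P D ∧ Nonempty (D →g B')} ⊆ {D | P D ∧ Nonempty (D →g B)} := by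
    rintro D ⟨hD, ⟨g⟩⟩
    exact ⟨hD, ⟨f.comp g⟩⟩
  have heq := Set.eq_of_subset_of_ncard_le hsub (hmin B' hB') (Set.toFinite _)
  have : B ∈ {D | P D ∧ Nonempty (D →g B)} := ⟨hB, ⟨SimpleGraph.Hom.id⟩⟩
  rw [← heq] at this
  exact this.2

/-- A finite graph has an endomorphism whose range (the vertex set of its core) is minimal. -/
lemma exists_core {V : Type} [Finite V] (B : SimpleGraph V) :
    ∃ φ : B →g B, ∀ ψ : B →g B, Set.range ψ ⊆ Set.range φ → Set.range ψ = Set.range φ := by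
  classical
  have hex : ∃ n, ∃ φ : B →g B, (Set.range φ).ncard = n := ⟨_, SimpleGraph.Hom.id, rfl⟩
  obtain ⟨φ, hφ⟩ := Nat.find_spec hex
  refine ⟨φ, fun ψ hψ => Set.eq_of_subset_of_ncard_le hψ ?_ (Set.toFinite _)⟩
  rw [hφ]
  exact Nat.find_min' hex ⟨ψ, rfl⟩

/-- A self-map of a finite type permuting `K` has an iterate that is the identity on `K`. -/
lemma exists_iterate_eq_id {V : Type} [Finite V] (p : V → V) (K : Set V) (hp : p '' K = K) :
    ∃ N, ∀ x ∈ K, p^[N + 1] x = x := by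
  have hmap : Set.MapsTo p K K := fun x hx => hp ▸ Set.mem_image_of_mem p hx
  have hsurj : Function.Surjective (hmap.restrict p K K) := by
    rintro ⟨y, hy⟩
    rw [← hp] at hy
    obtain ⟨x, hx, rfl⟩ := hy
    exact ⟨⟨x, hx⟩, rfl⟩
  have hbij : Function.Bijective (hmap.restrict p K K) :=
    ⟨Finite.injective_iff_surjective.mpr hsurj, hsurj⟩
  let e := Equiv.ofBijective _ hbij
  obtain ⟨N, hN, hpow⟩ := (isOfFinOrder_of_finite e).exists_pow_eq_one
  refine ⟨N - 1, fun x hx => ?_⟩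
  rw [Nat.sub_add_cancel hN]
  have hit : ∀ j, ((e ^ j) ⟨x, hx⟩ : V) = p^[j] x := by
    intro j
    induction j with
    | zero => rfl
    | succ j ih =>
      rw [pow_succ', Equiv.Perm.mul_apply, Function.iterate_succ_apply', ← ih]
      rfl
  rw [← hit, hpow]
  rfl

/-- A graph that is not 2-colourable and maps to its induced subgraph on `K` has a cycle
`z 0, …, z (k + 2)` in `K`. -/
lemma exists_cycle_in_range {V : Type} (B : SimpleGraph V) (hB : ¬ B.Colorable 2)
    (φ : B →g B) :
    ∃ k, ∃ z : ℕ → V, Set.InjOn z {j | j ≤ k + 2} ∧ (∀ j, z j ∈ Set.range φ) ∧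
      (∀ j < k + 2, B.Adj (z j) (z (j + 1))) ∧ B.Adj (z 0) (z (k + 2)) := by
  let K := B.induce (Set.range φ)
  let φ' : B →g K := ⟨fun v => ⟨φ v, v, rfl⟩, fun h => φ.map_adj h⟩
  have hK : ¬ K.IsAcyclic := fun hac => hB (hac.colorable_two.of_hom φ')
  unfold SimpleGraph.IsAcyclic at hK
  push Not at hK
  obtain ⟨v, w, hw⟩ := hK
  have hlen := hw.three_le_length
  obtain ⟨k, hk⟩ := Nat.exists_eq_add_of_le' hlen
  refine ⟨k, fun j => (w.getVert j : V), ?_, fun j => (w.getVert j).2, ?_, ?_⟩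
  · intro i hi j hj hij
    refine hw.getVert_injOn' ?_ ?_ (Subtype.ext hij) <;> simp only [Set.mem_ofPred_eq] at * <;> omega
  · intro j hj
    exact w.adj_getVert_succ (by omega)
  · have h1 : K.Adj (w.getVert (k + 2)) (w.getVert (k + 2 + 1)) := w.adj_getVert_succ (by omega)
    have h2 : w.getVert (k + 2 + 1) = w.getVert 0 := by
      rw [show k + 2 + 1 = w.length by omega, w.getVert_length, w.getVert_zero]
    rw [h2] at h1
    exact h1.symm

/-- There are an ordering `σ` of `V(H)` and a labelling `c` such that, for every other ordering
`τ`, each homomorphism between the two graphs of backward pairs carries some cycle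
`w 0, …, w (k + 2)` of the source to a cycle along which the labels increase. -/
lemma exists_scheme {h : ℕ} (EH : Fin h → Fin h → Prop) (hor : IsOrientedGraph EH)
    (hno : ¬ KColorable EH 2) :
    ∃ σ c : Fin h → ℕ, Function.Injective σ ∧ Function.Injective c ∧ (∀ i, c i < h * h) ∧
      ∀ τ : Fin h → ℕ, Function.Injective τ → ∀ f : backGraph EH τ →g backGraph EH σ,
        ∃ k, ∃ w : ℕ → Fin h,
          (∀ j < k + 2, (backGraph EH τ).Adj (w j) (w (j + 1)) ∧ c (f (w j)) < c (f (w (j + 1)))) ∧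
          (backGraph EH τ).Adj (w 0) (w (k + 2)) := by
  classical
  obtain ⟨B, ⟨σ, hσ, rfl⟩, hmin⟩ := exists_hom_minimal
    (fun B => ∃ σ : Fin h → ℕ, Function.Injective σ ∧ backGraph EH σ = B)
    ⟨_, fun i => (i : ℕ), Fin.val_injective, rfl⟩
  obtain ⟨φ, hφ⟩ := exists_core (backGraph EH σ)
  obtain ⟨k, z, hzinj, hzK, hzadj, hzlast⟩ :=
    exists_cycle_in_range _ (backGraph_not_colorable hno hσ hor) φ
  have hkh : k + 3 ≤ h := by
    have := Finset.card_le_card_of_injOn (s := Finset.range (k + 3)) (t := Finset.univ) z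
      (fun _ _ => Finset.mem_univ _) (fun i hi j hj hij => hzinj
        (by have := Finset.mem_range.mp (Finset.mem_coe.mp hi); simp only [Set.mem_ofPred_eq]; omega)
        (by have := Finset.mem_range.mp (Finset.mem_coe.mp hj); simp only [Set.mem_ofPred_eq]; omega)
        hij)
    simpa using this
  -- the position on the cycle `z`
  obtain ⟨b, hbz, hbh⟩ : ∃ b : Fin h → ℕ, (∀ j ≤ k + 2, b (z j) = j) ∧ ∀ v, b v < h := by
    refine ⟨fun v => if hv : ∃ j ≤ k + 2, z j = v then hv.choose else 0, ?_, ?_⟩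
    · intro j hj
      have hv : ∃ i ≤ k + 2, z i = z j := ⟨j, hj, rfl⟩
      simp only [dif_pos hv]
      exact hzinj hv.choose_spec.1 hj hv.choose_spec.2
    · intro v
      dsimp only
      split_ifs with hv
      · have := hv.choose_spec.1
        omega
      · omega
  refine ⟨σ, fun i => h * b (φ i) + i, hσ, ?_, ?_, ?_⟩
  · intro i j hij
    have := congrArg (· % h) hij
    simp only [Nat.mul_add_mod, Nat.mod_eq_of_lt i.2, Nat.mod_eq_of_lt j.2] at this
    exact Fin.ext this
  · intro i
    calc h * b (φ i) + i < h * b (φ i) + h := by omega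
      _ = h * (b (φ i) + 1) := by ring
      _ ≤ h * h := Nat.mul_le_mul_left _ (hbh _)
  · intro τ hτ f
    obtain ⟨g⟩ := hmin _ ⟨τ, hτ, rfl⟩ ⟨f⟩
    -- `p` permutes the vertices of the core, so one of its iterates can be used to turn `g`
    -- into a section of `φ ∘ f` over the core
    let p := φ.comp (f.comp g)
    have himg : p '' Set.range φ = Set.range φ := by
      rw [← Set.range_comp]
      refine hφ (p.comp φ) ?_
      rintro _ ⟨x, rfl⟩
      exact ⟨f (g (φ x)), rfl⟩
    obtain ⟨N, hN⟩ := exists_iterate_eq_id p _ himg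
    have hpit : ∀ M u v, (backGraph EH σ).Adj u v → (backGraph EH σ).Adj (p^[M] u) (p^[M] v) := by
      intro M
      induction M with
      | zero => exact fun u v huv => huv
      | succ M ih =>
        intro u v huv
        rw [Function.iterate_succ_apply', Function.iterate_succ_apply']
        exact p.map_adj (ih u v huv)
    have hsec : ∀ j, φ (f (g (p^[N] (z j)))) = z j := by
      intro j
      have := hN (z j) (hzK j)
      rwa [Function.iterate_succ_apply'] at this
    refine ⟨k, fun j => g (p^[N] (z j)), fun j hj => ⟨?_, ?_⟩, ?_⟩
    · exact g.map_adj (hpit N _ _ (hzadj j hj))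
    · dsimp only
      rw [hsec, hsec, hbz j (by omega), hbz (j + 1) (by omega)]
      have := (f (g (p^[N] (z j)))).2
      rw [mul_add]
      omega
    · exact g.map_adj (hpit N _ _ hzlast)

/-! ### Convexity of spheres -/

/-- Strict convexity of the sphere: a point of a sphere is a weighted mean of points of the same
sphere, with positive weights, only if they all coincide with it. -/
lemma sphere_rigid {m : ℕ} (l : ℕ) (ρ : ℤ) (a : ℕ → Fin m → ℤ) (b : Fin m → ℤ) (d : ℕ → ℤ)
    (ha : ∀ j < l, ∑ i, a j i ^ 2 = ρ) (hb : ∑ i, b i ^ 2 = ρ) (hd : ∀ j < l, 0 < d j)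
    (heq : ∀ i, ∑ j ∈ Finset.range l, d j * a j i = (∑ j ∈ Finset.range l, d j) * b i) :
    ∀ j < l, a j = b := by
  have hdist : ∀ j < l, ∑ i, (a j i - b i) ^ 2 = 2 * ρ - 2 * ∑ i, a j i * b i := by
    intro j hj
    have : ∑ i, (a j i - b i) ^ 2 = ∑ i, a j i ^ 2 + ∑ i, b i ^ 2 - 2 * ∑ i, a j i * b i := by
      rw [Finset.mul_sum, ← Finset.sum_add_distrib, ← Finset.sum_sub_distrib]
      exact Finset.sum_congr rfl fun i _ => by ring
    rw [this, ha j hj, hb]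
    ring
  have hinner : ∑ j ∈ Finset.range l, d j * ∑ i, a j i * b i = (∑ j ∈ Finset.range l, d j) * ρ := by
    calc ∑ j ∈ Finset.range l, d j * ∑ i, a j i * b i
        = ∑ i, (∑ j ∈ Finset.range l, d j * a j i) * b i := by
          simp_rw [Finset.mul_sum, Finset.sum_mul]
          rw [Finset.sum_comm]
          exact Finset.sum_congr rfl fun i _ => Finset.sum_congr rfl fun j _ => by ring
      _ = (∑ j ∈ Finset.range l, d j) * ρ := by
          rw [← hb, Finset.mul_sum]
          exact Finset.sum_congr rfl fun i _ => by rw [heq]; ring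
  have hzero : ∑ j ∈ Finset.range l, d j * ∑ i, (a j i - b i) ^ 2 = 0 := by
    calc ∑ j ∈ Finset.range l, d j * ∑ i, (a j i - b i) ^ 2
        = ∑ j ∈ Finset.range l, (2 * ρ * d j - 2 * (d j * ∑ i, a j i * b i)) :=
          Finset.sum_congr rfl fun j hj => by rw [hdist j (Finset.mem_range.mp hj)]; ring
      _ = 0 := by
          rw [Finset.sum_sub_distrib, ← Finset.mul_sum, ← Finset.mul_sum, hinner]
          ring
  intro j hj
  have hnn : ∀ j ∈ Finset.range l, 0 ≤ d j * ∑ i, (a j i - b i) ^ 2 := fun j hj =>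
    mul_nonneg (hd j (Finset.mem_range.mp hj)).le (Finset.sum_nonneg fun i _ => sq_nonneg _)
  have h1 := (Finset.sum_eq_zero_iff_of_nonneg hnn).mp hzero j (Finset.mem_range.mpr hj)
  have h2 : ∑ i, (a j i - b i) ^ 2 = 0 := (mul_eq_zero.mp h1).resolve_left (hd j hj).ne'
  funext i
  have h3 := (Finset.sum_eq_zero_iff_of_nonneg (fun i _ => sq_nonneg _)).mp h2 i (Finset.mem_univ i)
  exact sub_eq_zero.mp (pow_eq_zero_iff two_ne_zero |>.mp h3)

/-- An integer vector with entries in `[0, r)`, read modulo `q`. -/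
def toMod {m r : ℕ} (q : ℕ) (a : Fin m → Fin r) : Fin m → ZMod q := fun i => ((a i : ℕ) : ZMod q)

/-- The vectors with entries in `[0, r)` of squared Euclidean length `ρ`. -/
def sphereSet (m r ρ : ℕ) : Finset (Fin m → Fin r) :=
  Finset.univ.filter fun a => ∑ i, (a i : ℕ) ^ 2 = ρ

lemma mul_toMod_injective {m r q D : ℕ} (hq : D * r < q) {c c' : ℕ} (hc : c < D) (hc' : c' < D)
    (hne : c ≠ c') {a a' : Fin m → Fin r}
    (heq : ∀ i, ((c : ZMod q) - c') * toMod q a i = ((c : ZMod q) - c') * toMod q a' i) :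
    a = a' := by
  funext i
  have h1 : (((c : ℤ) - c') * ((a i : ℕ) - (a' i : ℕ) : ℤ) : ℤ) = 0 := by
    refine Int.eq_zero_of_abs_lt_dvd (m := (q : ℤ)) ?_ ?_
    · rw [← ZMod.intCast_zmod_eq_zero_iff_dvd]
      push_cast
      rw [mul_sub, sub_eq_zero]
      exact heq i
    · rw [abs_mul]
      have h2 : |(c : ℤ) - c'| ≤ D := by rw [abs_le]; constructor <;> omega
      have h3 : |((a i : ℕ) - (a' i : ℕ) : ℤ)| ≤ r := by
        have := (a i).2
        have := (a' i).2
        rw [abs_le]; constructor <;> omega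
      calc _ ≤ (D : ℤ) * r := mul_le_mul h2 h3 (abs_nonneg _) (by positivity)
        _ < q := by exact_mod_cast hq
  have h2 : ((c : ℤ) - c') ≠ 0 := by omega
  have h3 := (mul_eq_zero.mp h1).resolve_left h2
  exact Fin.ext (by omega)

/-- A cycle of block vectors with increasing labels uses the same direction on all its edges:
adding up the increments gives a convex equation modulo `q`, which holds over the integers since
both sides are smaller than `q`. -/
lemma cycle_rigid {m r q D ρ : ℕ} (hq : D * r < q) (l : ℕ) (c : ℕ → ℕ) (hc : ∀ j < l, c j < c (j + 1))
    (hD : c l < D) (y : ℕ → Fin m → ZMod q) (a : ℕ → Fin m → Fin r) (b : Fin m → Fin r)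
    (ha : ∀ j < l, a j ∈ sphereSet m r ρ) (hb : b ∈ sphereSet m r ρ)
    (hy : ∀ j < l, ∀ i, y (j + 1) i - y j i = ((c (j + 1) : ZMod q) - c j) * toMod q (a j) i)
    (hlast : ∀ i, y l i - y 0 i = ((c l : ZMod q) - c 0) * toMod q b i) :
    ∀ j < l, a j = b := by
  have htel : ∑ j ∈ Finset.range l, ((c (j + 1) : ℤ) - c j) = (c l : ℤ) - c 0 :=
    Finset.sum_range_sub (fun j => (c j : ℤ)) l
  have hdpos : ∀ j < l, 0 < (c (j + 1) : ℤ) - c j := fun j hj => by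
    have := hc j hj
    omega
  have h0l : (0 : ℤ) ≤ (c l : ℤ) - c 0 := by
    rw [← htel]
    exact Finset.sum_nonneg fun j hj => (hdpos j (Finset.mem_range.mp hj)).le
  have key := sphere_rigid l (ρ : ℤ) (fun j i => ((a j i : ℕ) : ℤ)) (fun i => ((b i : ℕ) : ℤ))
    (fun j => (c (j + 1) : ℤ) - c j)
    (fun j hj => by have := (Finset.mem_filter.mp (ha j hj)).2; exact_mod_cast this)
    (by have := (Finset.mem_filter.mp hb).2; exact_mod_cast this) hdpos ?_
  · intro j hj
    funext i
    have := congrFun (key j hj) i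
    exact Fin.ext (by exact_mod_cast this)
  · intro i
    rw [htel, ← sub_eq_zero]
    have hbnd : ∀ s : ℤ, 0 ≤ s → s ≤ r → 0 ≤ ((c l : ℤ) - c 0) * s ∧ ((c l : ℤ) - c 0) * s < q := by
      intro s hs hs'
      refine ⟨mul_nonneg h0l hs, ?_⟩
      calc ((c l : ℤ) - c 0) * s ≤ D * r := mul_le_mul (by omega) hs' hs (by positivity)
        _ < q := by exact_mod_cast hq
    refine Int.eq_zero_of_abs_lt_dvd (m := (q : ℤ)) ?_ ?_
    · rw [← ZMod.intCast_zmod_eq_zero_iff_dvd]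
      push_cast
      rw [sub_eq_zero]
      calc ∑ j ∈ Finset.range l, ((c (j + 1) : ZMod q) - c j) * ((a j i : ℕ) : ZMod q)
          = ∑ j ∈ Finset.range l, (y (j + 1) i - y j i) :=
            Finset.sum_congr rfl fun j hj => (hy j (Finset.mem_range.mp hj) i).symm
        _ = y l i - y 0 i := Finset.sum_range_sub (fun j => y j i) l
        _ = _ := hlast i
    · have h1 := hbnd (b i : ℕ) (by positivity) (by exact_mod_cast (b i).2.le)
      have h2 : (0 : ℤ) ≤ ∑ j ∈ Finset.range l, ((c (j + 1) : ℤ) - c j) * ((a j i : ℕ) : ℤ) :=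
        Finset.sum_nonneg fun j hj =>
          mul_nonneg (hdpos j (Finset.mem_range.mp hj)).le (by positivity)
      have h3 : ∑ j ∈ Finset.range l, ((c (j + 1) : ℤ) - c j) * ((a j i : ℕ) : ℤ) < q := by
        calc _ ≤ ∑ j ∈ Finset.range l, ((c (j + 1) : ℤ) - c j) * (r : ℤ) :=
              Finset.sum_le_sum fun j hj => mul_le_mul_of_nonneg_left
                (by exact_mod_cast (a j i).2.le) (hdpos j (Finset.mem_range.mp hj)).le
          _ = ((c l : ℤ) - c 0) * r := by rw [← Finset.sum_mul, htel]
          _ < q := (hbnd r (by positivity) le_rfl).2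
      rw [abs_lt]
      constructor <;> omega

/-- Pigeonhole: some sphere contains at least a `1 / (m r²)` proportion of the box. -/
lemma exists_sphere {m r : ℕ} (hm : 0 < m) (hr : 0 < r) :
    ∃ ρ, r ^ m ≤ m * r ^ 2 * (sphereSet m r ρ).card := by
  by_contra! hcon
  have hmaps : ∀ a ∈ (Finset.univ : Finset (Fin m → Fin r)),
      ∑ i, (a i : ℕ) ^ 2 ∈ Finset.range (m * r ^ 2) := by
    intro a _
    rw [Finset.mem_range]
    have : Nonempty (Fin m) := ⟨⟨0, hm⟩⟩
    calc ∑ i, (a i : ℕ) ^ 2 < ∑ _i : Fin m, r ^ 2 :=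
          Finset.sum_lt_sum_of_nonempty Finset.univ_nonempty
            fun i _ => Nat.pow_lt_pow_left (a i).2 two_ne_zero
      _ = m * r ^ 2 := by simp
  have hcard := Finset.card_eq_sum_card_fiberwise hmaps
  have hlt : ∑ ρ ∈ Finset.range (m * r ^ 2), m * r ^ 2 * (sphereSet m r ρ).card
      < ∑ _ρ ∈ Finset.range (m * r ^ 2), r ^ m :=
    Finset.sum_lt_sum_of_nonempty ⟨0, Finset.mem_range.mpr (by positivity)⟩ fun ρ _ => hcon ρ
  rw [← Finset.mul_sum] at hlt
  have h2 : ∑ ρ ∈ Finset.range (m * r ^ 2), (sphereSet m r ρ).card = r ^ m := by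
    have h3 : (Finset.univ : Finset (Fin m → Fin r)).card = r ^ m := by simp
    rw [← h3, hcard]
    rfl
  rw [h2] at hlt
  simp at hlt

/-! ### The tournament and its two counting estimates -/

/-- A balanced partition of `Fin n` into blocks indexed by `α`: `blk` is the block of a vertex,
`pos` its position in the block, and `mk a t` the vertex at position `t` of block `a`. -/
lemma exists_blocks {α : Type} [Fintype α] [Nonempty α] (n N : ℕ) (hN : Fintype.card α = N) :
    ∃ (blk : Fin n → α) (pos : Fin n → Fin (n / N + 1)) (mk : α → Fin (n / N) → Fin n),
      (∀ a t, blk (mk a t) = a) ∧ (∀ a, Function.Injective (mk a)) ∧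
      ∀ u v, blk u = blk v → pos u = pos v → u = v := by
  have hpos : 0 < N := hN ▸ Fintype.card_pos
  let e : α ≃ Fin N := Fintype.equivFinOfCardEq hN
  refine ⟨fun v => e.symm ⟨v % N, Nat.mod_lt _ hpos⟩,
    fun v => ⟨v / N, Nat.lt_succ_of_le (Nat.div_le_div_right v.2.le)⟩,
    fun a t => ⟨N * t + e a, ?_⟩, ?_, ?_, ?_⟩
  · calc N * t + e a < N * t + N := by have := (e a).2; omega
      _ = N * (t + 1) := by ring
      _ ≤ N * (n / N) := Nat.mul_le_mul_left _ t.2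
      _ ≤ n := Nat.mul_div_le n N
  · intro a t
    rw [Equiv.symm_apply_eq]
    ext
    simp [Nat.mod_eq_of_lt (e a).2]
  · intro a t t' htt
    have h1 : N * (t : ℕ) + e a = N * (t' : ℕ) + e a := congrArg Fin.val htt
    exact Fin.ext (Nat.eq_of_mul_eq_mul_left hpos (by omega))
  · intro u v h1 h2
    have h3 : (u : ℕ) % N = v % N := congrArg Fin.val (e.symm.injective h1)
    have h4 : (u : ℕ) / N = v / N := congrArg Fin.val h2
    apply Fin.ext
    rw [← Nat.div_add_mod (u : ℕ) N, ← Nat.div_add_mod (v : ℕ) N, h3, h4]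

/-- The pairs on which the tournament runs against the ordering of its vertices. The vertex `v`
lies in the block `(part, vector) = blk v`. -/
def isBack {h m r q : ℕ} {V : Type*} (EH : Fin h → Fin h → Prop) (σ c : Fin h → ℕ)
    (S : Finset (Fin m → Fin r)) (blk : V → Fin h × (Fin m → ZMod q)) (u v : V) : Prop :=
  (backGraph EH σ).Adj (blk u).1 (blk v).1 ∧ ∃ a ∈ S, ∀ i,
    (blk v).2 i - (blk u).2 i = ((c (blk v).1 : ZMod q) - c (blk u).1) * toMod q a i

lemma isBack_symm {h m r q : ℕ} {V : Type*} {EH : Fin h → Fin h → Prop} {σ c : Fin h → ℕ}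
    {S : Finset (Fin m → Fin r)} {blk : V → Fin h × (Fin m → ZMod q)} {u v : V}
    (huv : isBack EH σ c S blk u v) : isBack EH σ c S blk v u := by
  obtain ⟨h1, a, ha, h2⟩ := huv
  exact ⟨h1.symm, a, ha, fun i => by linear_combination -(h2 i)⟩

/-- The tournament in which `u → v` if `key u < key v` and `(u, v)` is not a backward pair, or
`key v < key u` and it is. -/
def orderTournament {V : Type*} (key : V → ℕ) (G : V → V → Prop) (u v : V) : Prop :=
  (key u < key v ∧ ¬ G u v) ∨ (key v < key u ∧ G u v)

lemma orderTournament_isTournament {V : Type*} {key : V → ℕ} (hkey : Function.Injective key)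
    {G : V → V → Prop} (hG : ∀ u v, G u v → G v u) : IsTournament (orderTournament key G) := by
  refine ⟨fun x hx => ?_, fun x y hxy => ?_⟩
  · rcases hx with hx | hx <;> exact lt_irrefl _ hx.1
  · have h1 : key x ≠ key y := fun h => hxy (hkey h)
    have h2 : G x y ↔ G y x := ⟨hG _ _, hG _ _⟩
    unfold orderTournament
    rw [h2]
    by_cases h3 : G y x
    · simp only [h3, not_true_eq_false, and_false, and_true, false_or]
      omega
    · simp only [h3, not_false_eq_true, and_false, and_true, or_false]
      omega

/-- The construction, with the two counting estimates left in terms of the parameters. -/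
lemma construction {h m r q ρ : ℕ} [NeZero q] (hh : 0 < h) (EH : Fin h → Fin h → Prop)
    (hor : IsOrientedGraph EH) (hno : ¬ KColorable EH 2) (hq : h * h * r < q) (n : ℕ) :
    ∃ ET : Fin n → Fin n → Prop, IsTournament ET ∧
      (∀ ε : ℝ, ε * (n : ℝ) ^ 2 ≤
        ((q ^ m * (sphereSet m r ρ).card * (n / (h * q ^ m)) ^ 2 : ℕ) : ℝ) → 0 < n / (h * q ^ m) →
        EpsFar EH ET ε) ∧
      copyCount EH ET * n ≤ h ^ 4 * (n / (h * q ^ m) + 1) * n ^ h := by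
  classical
  obtain ⟨σ, c, hσ, hc, hcD, hsch⟩ := exists_scheme EH hor hno
  set S := sphereSet m r ρ with hS
  have : Nonempty (Fin h) := ⟨⟨0, hh⟩⟩
  have hcardB : Fintype.card (Fin h × (Fin m → ZMod q)) = h * q ^ m := by simp
  obtain ⟨blk, pos, mk, hblkmk, hmkinj, hblkpos⟩ :=
    exists_blocks (α := Fin h × (Fin m → ZMod q)) n _ hcardB
  let key : Fin n → ℕ := fun v => σ (blk v).1 * n + v
  have hkey : Function.Injective key := by
    intro u v huv
    have := congrArg (· % n) huv
    simp only [key, Nat.mul_add_mod', Nat.mod_eq_of_lt u.2, Nat.mod_eq_of_lt v.2] at this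
    exact Fin.ext this
  have hkeylt : ∀ u v, σ (blk u).1 < σ (blk v).1 → key u < key v := by
    intro u v huv
    calc key u < σ (blk u).1 * n + n := by have := u.2; simp only [key]; omega
      _ = (σ (blk u).1 + 1) * n := by ring
      _ ≤ σ (blk v).1 * n := Nat.mul_le_mul_right _ huv
      _ ≤ key v := Nat.le_add_right _ _
  let G := isBack EH σ c S blk
  refine ⟨orderTournament key G, orderTournament_isTournament hkey fun _ _ => isBack_symm, ?_, ?_⟩
  · intro ε hε hp0 ET' hT' hlt
    by_contra hfree
    -- the canonical copy with base point `x`, direction `a` and positions `t`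
    let cp : (Fin m → ZMod q) → (Fin m → Fin r) → (Fin h → Fin (n / (h * q ^ m))) → Fin h → Fin n :=
      fun x a t i => mk (i, fun k => x k + (c i : ZMod q) * toMod q a k) (t i)
    have hcpblk : ∀ x a t i, blk (cp x a t i) = (i, fun k => x k + (c i : ZMod q) * toMod q a k) :=
      fun x a t i => hblkmk _ _
    have hcpinj : ∀ x a t, Function.Injective (cp x a t) := by
      intro x a t i j hij
      have := congrArg blk hij
      rw [hcpblk, hcpblk] at this
      exact congrArg Prod.fst this
    have hcpedge : ∀ x, ∀ a ∈ S, ∀ t i j, EH i j →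
        orderTournament key G (cp x a t i) (cp x a t j) := by
      intro x a ha t i j hij
      have hne : σ i ≠ σ j := fun h => (hor i j hij).1 (hσ h)
      rcases lt_or_gt_of_ne hne with hlt | hlt
      · refine Or.inl ⟨hkeylt _ _ (by rw [hcpblk, hcpblk]; exact hlt), fun hG => ?_⟩
        have hadj := hG.1
        rw [hcpblk, hcpblk] at hadj
        rcases hadj with h1 | h1
        · exact absurd h1.2 (not_lt.mpr hlt.le)
        · exact (hor i j hij).2 h1.1
      · refine Or.inr ⟨hkeylt _ _ (by rw [hcpblk, hcpblk]; exact hlt), ?_, a, ha, fun k => ?_⟩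
        · rw [hcpblk, hcpblk]
          exact Or.inl ⟨hij, hlt⟩
        · rw [hcpblk, hcpblk]
          ring
    let D : Set (Fin n × Fin n) := {p | orderTournament key G p.1 p.2 ∧ ET' p.2 p.1}
    -- every canonical copy has a reversed edge
    have hkill : ∀ ω : (Fin m → ZMod q) × S × (Fin h → Fin (n / (h * q ^ m))),
        ∃ ij : Fin h × Fin h, ij.1 ≠ ij.2 ∧
          (cp ω.1 ω.2.1 ω.2.2 ij.1, cp ω.1 ω.2.1 ω.2.2 ij.2) ∈ D := by
      rintro ⟨x, ⟨a, ha⟩, t⟩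
      by_contra! hcon
      refine hfree ⟨cp x a t, hcpinj x a t, fun i j hij => ?_⟩
      have hne := (hor i j hij).1
      have h1 := hcon (i, j) hne
      have hne' : cp x a t i ≠ cp x a t j := fun h => hne (hcpinj x a t h)
      rw [hT'.2 _ _ hne']
      exact fun h2 => h1 ⟨hcpedge x a ha t i j hij, h2⟩
    choose ij hijne hijD using hkill
    let P := Fin (n / (h * q ^ m))
    let Φ : ((Fin m → ZMod q) × S × (Fin h → P)) × (P × P) → D × (Fin h → P) := fun ω =>
      (⟨_, hijD ω.1⟩, Function.update (Function.update ω.1.2.2 (ij ω.1).1 ω.2.1) (ij ω.1).2 ω.2.2)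
    have hΦ : Function.Injective Φ := by
      rintro ⟨ω, s⟩ ⟨ω', s'⟩ heq
      have hne := hijne ω
      have e1 : (cp ω.1 ω.2.1 ω.2.2 (ij ω).1, cp ω.1 ω.2.1 ω.2.2 (ij ω).2) =
          (cp ω'.1 ω'.2.1 ω'.2.2 (ij ω').1, cp ω'.1 ω'.2.1 ω'.2.2 (ij ω').2) :=
        congrArg (fun z => (z.1 : Fin n × Fin n)) heq
      have e2 := congrArg Prod.snd heq
      simp only [Φ] at e2
      generalize ij ω = p at e1 e2 hne
      generalize ij ω' = p' at e1 e2
      obtain ⟨x, a, t⟩ := ω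
      obtain ⟨x', a', t'⟩ := ω'
      obtain ⟨i, j⟩ := p
      obtain ⟨i', j'⟩ := p'
      obtain ⟨s1, s2⟩ := s
      obtain ⟨s1', s2'⟩ := s'
      dsimp only at e1 e2 hne
      have ei := congrArg Prod.fst e1
      have ej := congrArg Prod.snd e1
      dsimp only at ei ej
      have bi := congrArg blk ei
      have bj := congrArg blk ej
      rw [hcpblk, hcpblk] at bi bj
      obtain rfl : i = i' := congrArg Prod.fst bi
      obtain rfl : j = j' := congrArg Prod.fst bj
      have bi2 : ∀ k, x k + (c i : ZMod q) * toMod q a.1 k =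
          x' k + (c i : ZMod q) * toMod q a'.1 k :=
        fun k => congrFun (congrArg Prod.snd bi) k
      have bj2 : ∀ k, x k + (c j : ZMod q) * toMod q a.1 k =
          x' k + (c j : ZMod q) * toMod q a'.1 k :=
        fun k => congrFun (congrArg Prod.snd bj) k
      have haa : a = a' := by
        refine Subtype.ext (mul_toMod_injective hq (hcD i) (hcD j) (fun h => hne (hc h)) fun k => ?_)
        linear_combination bi2 k - bj2 k
      subst haa
      have hxx : x = x' := funext fun k => by simpa using bi2 k
      subst hxx
      have ti : t i = t' i := hmkinj _ ei
      have tj : t j = t' j := hmkinj _ ej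
      have hs2 : s2 = s2' := by simpa using congrFun e2 j
      have hs1 : s1 = s1' := by simpa [Function.update_of_ne hne] using congrFun e2 i
      have htt : t = t' := by
        funext k
        by_cases hki : k = i
        · rw [hki, ti]
        by_cases hkj : k = j
        · rw [hkj, tj]
        simpa [Function.update_of_ne hki, Function.update_of_ne hkj] using congrFun e2 k
      rw [htt, hs1, hs2]
    have hcard := Fintype.card_le_of_injective Φ hΦ
    simp only [Fintype.card_prod, Fintype.card_pi, Fintype.card_fin, Fintype.card_coe, P,
      Finset.prod_const, Finset.card_univ, ZMod.card] at hcard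
    have hDcard : Fintype.card D = Set.ncard D := (Set.ncard_eq_toFinset_card' D).trans
      (Set.toFinset_card D) |>.symm
    rw [hDcard] at hcard
    have hle : q ^ m * S.card * (n / (h * q ^ m)) ^ 2 ≤ D.ncard := by
      refine Nat.le_of_mul_le_mul_right (le_trans (le_of_eq ?_) hcard) (pow_pos hp0 h)
      ring
    have hlt' : (D.ncard : ℝ) < ε * (n : ℝ) ^ 2 := by simpa [D] using hlt
    exact absurd (lt_of_lt_of_le hlt' hε) (not_lt.mpr (by exact_mod_cast hle))
  · -- in every copy, the block vector of one vertex is determined by two others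
    have hdet : ∀ f : Fin h → Fin n, (Function.Injective f ∧
        ∀ u v, EH u v → orderTournament key G (f u) (f v)) →
        ∃ s : Fin h × Fin h × Fin h, s.1 ≠ s.2.2 ∧ s.2.1 ≠ s.2.2 ∧
          c (blk (f s.1)).1 ≠ c (blk (f s.2.1)).1 ∧ ∃ a : Fin m → Fin r,
          (∀ i, (blk (f s.2.1)).2 i - (blk (f s.1)).2 i =
            ((c (blk (f s.2.1)).1 : ZMod q) - c (blk (f s.1)).1) * toMod q a i) ∧
          (∀ i, (blk (f s.2.2)).2 i - (blk (f s.2.1)).2 i =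
            ((c (blk (f s.2.2)).1 : ZMod q) - c (blk (f s.2.1)).1) * toMod q a i) := by
      rintro f ⟨hfinj, hfE⟩
      let τ : Fin h → ℕ := fun s => key (f s)
      have hτ : Function.Injective τ := hkey.comp hfinj
      have hback : ∀ s t, (backGraph EH τ).Adj s t → G (f s) (f t) := by
        have hone : ∀ s t, EH s t → τ t < τ s → G (f s) (f t) := by
          intro s t hst hlt
          rcases hfE s t hst with h1 | h1
          · exact absurd h1.1 (not_lt.mpr hlt.le)
          · exact h1.2
        rintro s t (⟨h1, h2⟩ | ⟨h1, h2⟩)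
        · exact hone s t h1 h2
        · exact isBack_symm (hone t s h1 h2)
      let F : backGraph EH τ →g backGraph EH σ := ⟨fun s => (blk (f s)).1, fun hst => (hback _ _ hst).1⟩
      obtain ⟨k, w, hw, hwlast⟩ := hsch τ hτ F
      have hlab : ∀ j < k + 2, c (blk (f (w j))).1 < c (blk (f (w (j + 1)))).1 :=
        fun j hj => (hw j hj).2
      have hedge : ∀ j, ∃ a, j < k + 2 → a ∈ S ∧ ∀ i,
          (blk (f (w (j + 1)))).2 i - (blk (f (w j))).2 i =
            ((c (blk (f (w (j + 1)))).1 : ZMod q) - c (blk (f (w j))).1) * toMod q a i := by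
        intro j
        obtain ⟨-, b, -⟩ := hback _ _ hwlast
        by_cases hj : j < k + 2
        · obtain ⟨-, a, ha, ha'⟩ := hback _ _ (hw j hj).1
          exact ⟨a, fun _ => ⟨ha, ha'⟩⟩
        · exact ⟨b, fun h => absurd h hj⟩
      choose a ha using hedge
      obtain ⟨-, b, hb, hb'⟩ := hback _ _ hwlast
      have hrig := cycle_rigid hq (k + 2) (fun j => c (blk (f (w j))).1) hlab (hcD _)
        (fun j => (blk (f (w j))).2) a b (fun j hj => (ha j hj).1) hb (fun j hj => (ha j hj).2) hb'
      have l0 := hlab 0 (by omega)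
      have l1 := hlab 1 (by omega)
      have hne : ∀ u v, c (blk (f u)).1 < c (blk (f v)).1 → u ≠ v := by
        rintro u v huv rfl
        exact lt_irrefl _ huv
      have h0 := (ha 0 (by omega)).2
      have h1 := (ha 1 (by omega)).2
      rw [hrig 0 (by omega)] at h0
      rw [hrig 1 (by omega)] at h1
      exact ⟨(w 0, w 1, w 2), hne _ _ (l0.trans l1), hne _ _ l1, l0.ne, b, h0, h1⟩
    let Cp : Set (Fin h → Fin n) := {f | Function.Injective f ∧
        ∀ u v, EH u v → orderTournament key G (f u) (f v)}
    have hdet' : ∀ f : Cp, _ := fun f => hdet f.1 f.2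
    choose s hs13 hs23 hsc a ha1 ha2 using hdet'
    let Ψ : Cp × Fin n → ((Fin h × Fin h × Fin h) × Fin h) × Fin (n / (h * q ^ m) + 1) ×
        (Fin h → Fin n) := fun z =>
      ((s z.1, (blk (z.1.1 (s z.1).2.2)).1), pos (z.1.1 (s z.1).2.2),
        Function.update z.1.1 (s z.1).2.2 z.2)
    have hΨ : Function.Injective Ψ := by
      rintro ⟨f, x⟩ ⟨f', x'⟩ heq
      simp only [Ψ, Prod.mk.injEq] at heq
      obtain ⟨⟨e1, e2⟩, e3, e4⟩ := heq
      have h13 := hs13 f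
      have h23 := hs23 f
      have hcc := hsc f
      have A1 := ha1 f
      have A2 := ha2 f
      have A1' := ha1 f'
      have A2' := ha2 f'
      rw [← e1] at A1' A2' e2 e3 e4
      generalize s f = p at *
      obtain ⟨s1, s2, s3⟩ := p
      dsimp only at *
      have hx : x = x' := by simpa using congrFun e4 s3
      have hoff : ∀ i, i ≠ s3 → f.1 i = f'.1 i := fun i hi => by
        simpa [Function.update_of_ne hi] using congrFun e4 i
      rw [← hoff s1 h13, ← hoff s2 h23] at A1'
      rw [← hoff s2 h23, ← e2] at A2'
      have haa : a f = a f' := mul_toMod_injective hq (hcD _) (hcD _) (Ne.symm hcc)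
        fun i => (A1 i).symm.trans (A1' i)
      have hblk : blk (f.1 s3) = blk (f'.1 s3) := by
        refine Prod.ext e2 (funext fun i => ?_)
        have h1 := A2 i
        have h2 := A2' i
        rw [haa] at h1
        linear_combination h1 - h2
      have h3 : f.1 s3 = f'.1 s3 := hblkpos _ _ hblk e3
      have hff : f = f' := Subtype.ext (funext fun i => by
        by_cases hi : i = s3
        · rw [hi, h3]
        · exact hoff i hi)
      rw [hff, hx]
    have hcard := Fintype.card_le_of_injective Ψ hΨ
    simp only [Fintype.card_prod, Fintype.card_pi, Fintype.card_fin,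
      Finset.prod_const, Finset.card_univ] at hcard
    have hCcard : Fintype.card Cp = Set.ncard Cp := (Set.ncard_eq_toFinset_card' Cp).trans
      (Set.toFinset_card Cp) |>.symm
    rw [hCcard] at hcard
    change Cp.ncard * n ≤ _
    refine hcard.trans (le_of_eq ?_)
    ring

/-! ### Choice of parameters -/

/-- With `r = 2 ^ m` and `q = 2 ^ (3 h + 3 + m)`, a sphere satisfying the pigeonhole bound has
density at least `4 h² / 2 ^ ((6 h + 9) m)` in `(ZMod q) ^ m`. -/
lemma sphere_density {h m ρ : ℕ}
    (hρ : (2 ^ m) ^ m ≤ m * (2 ^ m) ^ 2 * (sphereSet m (2 ^ m) ρ).card) (hm : 0 < m) :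
    4 * h ^ 2 * (2 ^ (3 * h + 3 + m)) ^ m ≤
      2 ^ ((6 * h + 9) * m) * (sphereSet m (2 ^ m) ρ).card := by
  set s := (sphereSet m (2 ^ m) ρ).card
  have hh : h ≤ 2 ^ h := Nat.lt_two_pow_self.le
  have h1 : 4 * h ^ 2 ≤ 2 ^ ((3 * h + 3) * m) := by
    calc 4 * h ^ 2 ≤ 2 ^ 2 * (2 ^ h) ^ 2 := by gcongr; norm_num
      _ = 2 ^ (2 + h * 2) := by rw [← pow_mul, ← pow_add]
      _ ≤ 2 ^ ((3 * h + 3) * m) := Nat.pow_le_pow_right (by norm_num) (by nlinarith)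
  have h2 : m ≤ 2 ^ m := Nat.lt_two_pow_self.le
  calc 4 * h ^ 2 * (2 ^ (3 * h + 3 + m)) ^ m
      = 4 * h ^ 2 * 2 ^ ((3 * h + 3) * m) * (2 ^ m) ^ m := by
        rw [pow_add, mul_pow, ← pow_mul]
        ring
    _ ≤ 2 ^ ((3 * h + 3) * m) * 2 ^ ((3 * h + 3) * m) * (2 ^ m * (2 ^ m) ^ 2 * s) := by
        gcongr
        exact hρ.trans (by gcongr)
    _ = 2 ^ ((6 * h + 9) * m) * s := by ring

/-- the hard direction — for every non-2-colorable oriented graph `H`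
on `h` vertices there are tournaments that are `ε`-far from `H`-freeness but contain
only `ε^(α·log(1/ε)) · n^h` copies of `H`. Logarithm is to base 2. -/
theorem stmt2 (h : ℕ) (hh : 2 ≤ h) :
    ∃ ε₀ α : ℝ, 0 < ε₀ ∧ 0 < α ∧
      ∀ EH : Fin h → Fin h → Prop, IsOrientedGraph EH → ¬ KColorable EH 2 →
        ∀ ε : ℝ, 0 < ε → ε < ε₀ → ∃ n₀ : ℕ, ∀ n : ℕ, n₀ ≤ n →
          ∃ ET : Fin n → Fin n → Prop, IsTournament ET ∧ EpsFar EH ET ε ∧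
            (copyCount EH ET : ℝ) ≤ ε ^ (α * Real.logb 2 (1 / ε)) * (n : ℝ) ^ h := by
  set l : ℕ := 6 * h + 9 with hl
  have hlpos : (0 : ℝ) < l := by exact_mod_cast (by omega : 0 < l)
  refine ⟨2 ^ (-(l : ℝ)), (1 / (2 * l)) ^ 2, by positivity, by positivity, ?_⟩
  intro EH hor hno ε hε hε0
  set L := Real.logb 2 (1 / ε) with hL
  have hεL : ε = 2 ^ (-L) := by
    rw [hL, one_div, Real.logb_inv, neg_neg, Real.rpow_logb (by norm_num) (by norm_num) hε]
  have hlL : (l : ℝ) < L := by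
    rw [hεL] at hε0
    have := (Real.rpow_lt_rpow_left_iff (by norm_num : (1 : ℝ) < 2)).mp hε0
    linarith
  have hLpos : 0 < L := hlpos.trans hlL
  -- the dimension is proportional to `log (1 / ε)`
  set m := ⌊L / l⌋₊ with hm
  have hmpos : 0 < m := Nat.floor_pos.mpr ((one_le_div hlpos).mpr hlL.le)
  have hmle : (m : ℝ) * l ≤ L := by
    rw [← le_div_iff₀ hlpos]
    exact Nat.floor_le (div_nonneg hLpos.le hlpos.le)
  have hmge : L / (2 * l) ≤ m := by
    have h1 : L / l < m + 1 := Nat.lt_floor_add_one _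
    have h2 : (1 : ℝ) ≤ m := by exact_mod_cast hmpos
    have h3 : L / (2 * l) = L / l / 2 := by field_simp
    linarith
  have hε1 : ε * 2 ^ (l * m) ≤ 1 := by
    rw [hεL, ← Real.rpow_natCast 2 (l * m), ← Real.rpow_add (by norm_num)]
    refine Real.rpow_le_one_of_one_le_of_nonpos (by norm_num) ?_
    push_cast
    linarith
  obtain ⟨ρ, hρ⟩ := exists_sphere (r := 2 ^ m) hmpos (by positivity)
  set q := 2 ^ (3 * h + 3 + m) with hq
  have : NeZero q := ⟨by positivity⟩
  have hh2 : h < 2 ^ h := Nat.lt_two_pow_self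
  have hqr : h * h * 2 ^ m < q := by
    have h1 : h * h ≤ 2 ^ h * 2 ^ h := Nat.mul_le_mul hh2.le hh2.le
    calc h * h * 2 ^ m ≤ 2 ^ h * 2 ^ h * 2 ^ m := by gcongr
      _ = 2 ^ (h + h + m) := by rw [pow_add, pow_add]
      _ < q := Nat.pow_lt_pow_right (by norm_num) (by omega)
  have hN : 0 < h * q ^ m := by positivity
  refine ⟨h * q ^ m, fun n hn => ?_⟩
  obtain ⟨ET, hT, hfar, hcount⟩ := construction (m := m) (ρ := ρ) (by omega) EH hor hno hqr n
  have hdens := sphere_density (h := h) hρ hmpos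
  set s := (sphereSet m (2 ^ m) ρ).card
  have hp0 : 0 < n / (h * q ^ m) := Nat.div_pos hn hN
  have hnpos : 0 < n := lt_of_lt_of_le hN hn
  set p := n / (h * q ^ m) with hp
  have hpn : p * (h * q ^ m) ≤ n := Nat.div_mul_le_self _ _
  have hnp : n ≤ 2 * (h * q ^ m) * p := by
    have h1 : n < h * q ^ m * (p + 1) := Nat.lt_mul_div_succ n hN
    nlinarith
  refine ⟨ET, hT, hfar ε ?_ hp0, ?_⟩
  · rw [← hq, ← hl] at hdens
    clear_value s p q l
    have hdens' : (4 * h ^ 2 * q ^ m : ℝ) ≤ 2 ^ (l * m) * s := by exact_mod_cast hdens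
    have hnp' : (n : ℝ) ≤ 2 * (h * q ^ m) * p := by exact_mod_cast hnp
    push_cast
    calc ε * (n : ℝ) ^ 2 ≤ ε * (2 * (h * (q : ℝ) ^ m) * p) ^ 2 := by gcongr
      _ = ε * (4 * h ^ 2 * (q : ℝ) ^ m) * (q ^ m * p ^ 2) := by ring
      _ ≤ ε * (2 ^ (l * m) * s) * (q ^ m * p ^ 2) := by gcongr
      _ = ε * 2 ^ (l * m) * (q ^ m * s * p ^ 2) := by ring
      _ ≤ 1 * (q ^ m * s * p ^ 2) := mul_le_mul_of_nonneg_right hε1 (by positivity)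
      _ = q ^ m * s * p ^ 2 := one_mul _
  · -- the number of copies is at most `2 ^ (-m²) n ^ h`
    have hqm : 2 * h ^ 3 * 2 ^ m ^ 2 ≤ q ^ m := by
      calc 2 * h ^ 3 * 2 ^ m ^ 2 ≤ 2 * (2 ^ h) ^ 3 * 2 ^ m ^ 2 := by gcongr
        _ = 2 ^ (3 * h + 1 + m ^ 2) := by ring
        _ ≤ 2 ^ ((3 * h + 3 + m) * m) := Nat.pow_le_pow_right (by norm_num) (by
            have h1 : 3 * h + 3 ≤ (3 * h + 3) * m := Nat.le_mul_of_pos_right _ hmpos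
            rw [add_mul, sq]
            omega)
        _ = q ^ m := by rw [hq, pow_mul]
    have hcop : copyCount EH ET * 2 ^ m ^ 2 ≤ n ^ h := by
      have h1 : h ^ 4 * (p + 1) * 2 ^ m ^ 2 ≤ n := by
        calc h ^ 4 * (p + 1) * 2 ^ m ^ 2 ≤ h ^ 4 * (2 * p) * 2 ^ m ^ 2 := by gcongr; omega
          _ = p * (h * (2 * h ^ 3 * 2 ^ m ^ 2)) := by ring
          _ ≤ p * (h * q ^ m) := by gcongr
          _ ≤ n := hpn
      refine Nat.le_of_mul_le_mul_right ?_ hnpos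
      calc copyCount EH ET * 2 ^ m ^ 2 * n = copyCount EH ET * n * 2 ^ m ^ 2 := by ring
        _ ≤ h ^ 4 * (p + 1) * n ^ h * 2 ^ m ^ 2 := by gcongr
        _ = n ^ h * (h ^ 4 * (p + 1) * 2 ^ m ^ 2) := by ring
        _ ≤ n ^ h * n := by gcongr
    have hpow : (2 : ℝ) ^ (-((m ^ 2 : ℕ) : ℝ)) ≤ ε ^ ((1 / (2 * l)) ^ 2 * L) := by
      have hL0 : 0 ≤ L / (2 * l) := div_nonneg hLpos.le (by positivity)
      rw [hεL, ← Real.rpow_mul (by norm_num)]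
      refine Real.rpow_le_rpow_of_exponent_le (by norm_num) ?_
      have h1 : (L / (2 * l)) ^ 2 ≤ (m : ℝ) ^ 2 := by gcongr
      have h2 : -L * ((1 / (2 * l)) ^ 2 * L) = -(L / (2 * l)) ^ 2 := by ring
      push_cast
      linarith
    have hcop' : (copyCount EH ET : ℝ) * 2 ^ m ^ 2 ≤ (n : ℝ) ^ h := by exact_mod_cast hcop
    calc (copyCount EH ET : ℝ)
        ≤ 2 ^ (-((m ^ 2 : ℕ) : ℝ)) * (n : ℝ) ^ h := by
          rw [Real.rpow_neg (by norm_num), Real.rpow_natCast, inv_mul_eq_div,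
            le_div_iff₀ (by positivity)]
          exact hcop'
      _ ≤ ε ^ ((1 / (2 * l)) ^ 2 * L) * (n : ℝ) ^ h := by gcongr
end

section
/- For every h ≥ 2 there exist m₀ = m₀(h) and γ = γ(h) > 0 with the following property. Let H be an oriented graph on h vertices and let D be an oriented graph on vertex set {1,…,k}, where 2 ≤ k ≤ h. Suppose H has a proper k-coloring V(H) = H₁ ∪ … ∪ H_k such that H_i → H_j (in H) for every (i,j) ∈ E(D). Then for every m ≥ m₀ there is a k-partite tournament F with parts V₁,…,V_k such that: (1) |V_i| = m for every i = 1,…,k; (2) V_i → V_j (in F) for every (i,j) ∈ E(D); (3) every completion of F contains a collection of at least γm² copies of H with the property that every edge e ∈ E(F) is contained in at most one of these copies. -/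
/-- A `k`-partite tournament on parts `{i} × Fin m`, `i : Fin k`: no edges inside a
part, and exactly one directed edge between any two vertices in different parts. -/
def IsMultipartiteTournament {k m : ℕ} (E : Fin k × Fin m → Fin k × Fin m → Prop) : Prop :=
  (∀ x y, E x y → x.1 ≠ y.1) ∧
  (∀ x y : Fin k × Fin m, x.1 ≠ y.1 → (E x y ↔ ¬ E y x))

/-- A completion of a `k`-partite tournament: a tournament agreeing with it on all
pairs of vertices lying in different parts. -/
def IsCompletion {k m : ℕ} (EF ET : Fin k × Fin m → Fin k × Fin m → Prop) : Prop :=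
  IsTournament ET ∧ ∀ x y : Fin k × Fin m, x.1 ≠ y.1 → (ET x y ↔ EF x y)

/-! ### Orders and transitive subtournaments -/

/-- By induction on `n`: put a vertex of `S` before its out-neighbours or after its in-neighbours,
whichever are more numerous. -/
lemma exists_chain {α : Type*} (T : α → α → Prop) (hT : IsTournament T) :
    ∀ (n : ℕ) (S : Finset α), 2 ^ n ≤ S.card →
      ∃ l : List α, l.length = n ∧ l.Pairwise T ∧ ∀ x ∈ l, x ∈ S := by
  classical
  intro n
  induction n with
  | zero => intro S _; exact ⟨[], by simp⟩
  | succ n ih =>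
    intro S hS
    have hpos : 0 < S.card := lt_of_lt_of_le (by positivity) hS
    obtain ⟨x, hx⟩ := Finset.card_pos.1 hpos
    set A := (S.erase x).filter (fun y => T x y) with hA
    set B := (S.erase x).filter (fun y => ¬ T x y) with hB
    have hAB : A.card + B.card = S.card - 1 := by
      rw [hA, hB, Finset.card_filter_add_card_filter_not, Finset.card_erase_of_mem hx]
    have hor : 2 ^ n ≤ A.card ∨ 2 ^ n ≤ B.card := by
      rw [pow_succ] at hS
      omega
    rcases hor with h1 | h1
    · obtain ⟨l, hl, hp, hm⟩ := ih A h1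
      refine ⟨x :: l, by simp [hl], ?_, ?_⟩
      · refine List.pairwise_cons.2 ⟨fun y hy => ?_, hp⟩
        exact (Finset.mem_filter.1 (hm y hy)).2
      · intro y hy
        rcases List.mem_cons.1 hy with rfl | hy
        · exact hx
        · exact Finset.mem_of_mem_erase (Finset.mem_filter.1 (hm y hy)).1
    · obtain ⟨l, hl, hp, hm⟩ := ih B h1
      refine ⟨l ++ [x], by simp [hl], ?_, ?_⟩
      · refine List.pairwise_append.2 ⟨hp, by simp, fun y hy z hz => ?_⟩
        rw [List.mem_singleton.1 hz]
        obtain ⟨h2, h3⟩ := Finset.mem_filter.1 (hm y hy)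
        exact (hT.2 y x (Finset.ne_of_mem_erase h2)).2 h3
      · intro y hy
        rcases List.mem_append.1 hy with hy | hy
        · exact Finset.mem_of_mem_erase (Finset.mem_filter.1 (hm y hy)).1
        · rw [List.mem_singleton.1 hy]; exact hx

/-- A tournament on `2 ^ h` vertices contains a transitive subtournament on `h` vertices. -/
lemma exists_transitive {h : ℕ} (T : Fin (2 ^ h) → Fin (2 ^ h) → Prop) (hT : IsTournament T) :
    ∃ e : Fin h ↪ Fin (2 ^ h), ∀ a b, a < b → T (e a) (e b) := by
  obtain ⟨l, hl, hp, -⟩ := exists_chain T hT h Finset.univ (by simp)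
  have key : ∀ a b : Fin h, a < b → T (l.get (a.cast hl.symm)) (l.get (b.cast hl.symm)) :=
    fun a b hab => List.pairwise_iff_get.1 hp _ _ hab
  refine ⟨⟨fun a => l.get (a.cast hl.symm), fun a b hab => ?_⟩, key⟩
  by_contra hne
  replace hab : l.get (a.cast hl.symm) = l.get (b.cast hl.symm) := hab
  rcases lt_or_gt_of_ne hne with h1 | h1
  · have := key a b h1
    rw [hab] at this
    exact hT.1 _ this
  · have := key b a h1
    rw [hab] at this
    exact hT.1 _ this

lemma exists_equiv_fin_lt {α : Type} [Fintype α] {h : ℕ} (hα : Fintype.card α = h)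
    (E : α → α → Prop) (hirr : ∀ x, ¬ Relation.TransGen E x x) :
    ∃ r : α ≃ Fin h, ∀ u v, E u v → r u < r v := by
  classical
  let P : PartialOrder α :=
    { le := fun x y => x = y ∨ Relation.TransGen E x y
      le_refl := fun x => Or.inl rfl
      le_trans := by
        rintro x y z (rfl | h1) (rfl | h2)
        · exact Or.inl rfl
        · exact Or.inr h2
        · exact Or.inr h1
        · exact Or.inr (h1.trans h2)
      le_antisymm := by
        rintro x y (rfl | h1) (h2 | h2)
        · rfl
        · rfl
        · exact h2.symm
        · exact (hirr x (h1.trans h2)).elim }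
  let iF : Fintype (LinearExtension α) := inferInstanceAs (Fintype α)
  let o : LinearExtension α ≃o Fin h :=
    (Fintype.orderIsoFinOfCardEq (LinearExtension α) hα).symm
  refine ⟨o.toEquiv, fun u v he => ?_⟩
  have hle : toLinearExtension u ≤ toLinearExtension v :=
    toLinearExtension.monotone (show u ≤ v from Or.inr (.single he))
  have hne : u ≠ v := by
    rintro rfl
    exact hirr u (.single he)
  exact o.lt_iff_lt.2 (lt_of_le_of_ne hle hne)

/-- One linear order of all vertices that is a topological order of every colour class. -/
lemma exists_topological_order {h k : ℕ} (EH : Fin h → Fin h → Prop) (col : Fin h → Fin k)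
    (hac : ∀ i : Fin k, AcyclicOn EH {v | col v = i}) :
    ∃ r : Fin h ≃ Fin h, ∀ u v, col u = col v → EH u v → r u < r v := by
  let E : Fin h → Fin h → Prop := fun u v => col u = col v ∧ EH u v
  have hE : ∀ x y, Relation.TransGen E x y → col x = col y ∧
      Relation.TransGen (fun a b => a ∈ {v | col v = col x} ∧ b ∈ {v | col v = col x} ∧ EH a b)
        x y := by
    intro x y hxy
    induction hxy with
    | single hb => exact ⟨hb.1, .single ⟨rfl, hb.1.symm, hb.2⟩⟩
    | tail _ hbc ih =>
      exact ⟨ih.1.trans hbc.1, ih.2.tail ⟨ih.1.symm, (ih.1.trans hbc.1).symm, hbc.2⟩⟩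
  obtain ⟨r, hr⟩ := exists_equiv_fin_lt (Fintype.card_fin h) E
    fun x hx => hac (col x) x (hE x x hx).2
  exact ⟨r, fun u v h1 h2 => hr u v ⟨h1, h2⟩⟩

/-! ### Guessing colourings -/

lemma line_unique {h p : ℕ} (hp : p.Prime) (hhp : h ≤ p) {i j : ℕ} (hi : i < h) (hj : j < h)
    (hij : i ≠ j) {a b a' b' : ZMod p} (h1 : a + i * b = a' + i * b')
    (h2 : a + j * b = a' + j * b') : a = a' ∧ b = b' := by
  have := Fact.mk hp
  have hne : (i : ZMod p) - j ≠ 0 := by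
    intro h0
    have h3 : (i : ZMod p) = j := sub_eq_zero.1 h0
    rw [ZMod.natCast_eq_natCast_iff'] at h3
    rw [Nat.mod_eq_of_lt (by omega), Nat.mod_eq_of_lt (by omega)] at h3
    exact hij h3
  have hb : b = b' := by
    have : ((i : ZMod p) - j) * (b - b') = 0 := by linear_combination h1 - h2
    rcases mul_eq_zero.1 this with h4 | h4
    · exact (hne h4).elim
    · exact sub_eq_zero.1 h4
  subst hb
  exact ⟨add_right_cancel h1, rfl⟩

lemma exists_large_exponent (Q : ℕ) (hQ : 0 < Q) :
    ∃ N : ℕ, ∀ p, N ≤ p → Q * (Q - 1) ^ p < Q ^ p := by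
  have hQ' : (0 : ℝ) < Q := by exact_mod_cast hQ
  have hc : ((Q - 1 : ℕ) : ℝ) = (Q : ℝ) - 1 := by
    rw [Nat.cast_sub hQ]; simp
  have hc0 : (0 : ℝ) ≤ (Q - 1 : ℕ) := Nat.cast_nonneg _
  have hlt : (((Q - 1 : ℕ) : ℝ) / Q) < 1 := by
    rw [div_lt_one hQ', hc]; linarith
  have h0 : (0 : ℝ) ≤ ((Q - 1 : ℕ) : ℝ) / Q := by positivity
  obtain ⟨N, hN⟩ := exists_pow_lt_of_lt_one (show (0 : ℝ) < 1 / Q by positivity) hlt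
  refine ⟨N, fun p hp => ?_⟩
  have h1 : (((Q - 1 : ℕ) : ℝ) / Q) ^ p < 1 / Q :=
    lt_of_le_of_lt (pow_le_pow_of_le_one h0 hlt.le hp) hN
  rw [div_pow, div_lt_div_iff₀ (by positivity) hQ'] at h1
  have h2 : (Q : ℝ) * ((Q - 1 : ℕ) : ℝ) ^ p < (Q : ℝ) ^ p := by linarith
  exact_mod_cast h2

/-- For a suitable prime `p`, guesses can be assigned to the lines `i ↦ a + i b` over `ZMod p` such
that every colouring agrees with the guess on at least one line. -/
lemma exists_guess (h : ℕ) (C : Type) [Fintype C] [Nonempty C] :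
    ∃ p : ℕ, p.Prime ∧ h ≤ p ∧ ∃ g : ZMod p × ZMod p → Fin h → C,
      ∀ c : Fin h → ZMod p → C, ∃ l : ZMod p × ZMod p,
        ∀ i : Fin h, c i (l.1 + (i : ℕ) * l.2) = g l i := by
  classical
  set Q := Fintype.card (Fin h → C) with hQ
  obtain ⟨N, hN⟩ := exists_large_exponent Q Fintype.card_pos
  obtain ⟨p, hpN, hp⟩ := Nat.exists_infinite_primes (max N h)
  refine ⟨p, hp, le_trans (le_max_right _ _) hpN, ?_⟩
  have := Fact.mk hp
  by_contra hcon
  push Not at hcon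
  let t : (Fin h → ZMod p → C) → ZMod p × ZMod p → Fin h → C :=
    fun c l i => c i (l.1 + (i : ℕ) * l.2)
  -- the assignments of guesses that are wrong for `c` on every line
  let bad : (Fin h → ZMod p → C) → Finset (ZMod p × ZMod p → Fin h → C) :=
    fun c => Fintype.piFinset fun l => Finset.univ.erase (t c l)
  have hcov : (Finset.univ : Finset (ZMod p × ZMod p → Fin h → C)) ⊆
      Finset.univ.biUnion bad := by
    intro g _
    obtain ⟨c, hc⟩ := hcon g
    refine Finset.mem_biUnion.2 ⟨c, Finset.mem_univ _, Fintype.mem_piFinset.2 fun l => ?_⟩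
    refine Finset.mem_erase.2 ⟨fun h1 => ?_, Finset.mem_univ _⟩
    obtain ⟨i, hi⟩ := hc l
    exact hi (congrFun h1 i).symm
  have hbad : ∀ c, (bad c).card = (Q - 1) ^ (p * p) := by
    intro c
    simp only [bad, Fintype.card_piFinset, Finset.card_erase_of_mem (Finset.mem_univ _),
      Finset.card_univ, ← hQ, Finset.prod_const, Fintype.card_prod, ZMod.card]
  have hcard := (Finset.card_le_card hcov).trans Finset.card_biUnion_le
  have hnum : Fintype.card (Fin h → ZMod p → C) = Q ^ p := by
    simp [hQ, ← pow_mul, mul_comm]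
  rw [Finset.sum_congr rfl (fun c _ => hbad c), Finset.sum_const, Finset.card_univ,
    Finset.card_univ, hnum, Fintype.card_fun, ← hQ, Fintype.card_prod, ZMod.card,
    smul_eq_mul, pow_mul, pow_mul, ← mul_pow] at hcard
  exact absurd hcard (not_le.2
    (Nat.pow_lt_pow_left (hN p ((le_max_left _ _).trans hpN)) hp.pos.ne'))

/-! ### The multipartite tournament of a system of lines -/

/-- Lines with guesses give a multipartite tournament. Part `i` contains disjoint blocks indexed by
`β`, the line `l` meets part `i` in the block `pt l i`, and `lab l i` is its guess for that block.
If every colouring of the blocks is guessed correctly by `N` lines, every completion contains `N`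
copies of `H` that share no edge between different parts. -/
lemma forced_of_lines {h k m N : ℕ} {β Λ : Type} [Finite Λ]
    (EH : Fin h → Fin h → Prop) (hEH : IsOrientedGraph EH)
    (ED : Fin k → Fin k → Prop) (hED : IsOrientedGraph ED) (col : Fin h → Fin k)
    (r : Fin h ≃ Fin h) (hr : ∀ u v, col u = col v → EH u v → r u < r v)
    (hcol : ∃ u v, col u ≠ col v)
    (hD : ∀ i j : Fin k, ED i j → ∀ u v : Fin h, col u = i → col v = j → ¬ EH v u)
    (emb : β × Fin (2 ^ h) ↪ Fin m) (pt : Λ → Fin k → β)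
    (hlin : ∀ l l' i j, i ≠ j → pt l i = pt l' i → pt l j = pt l' j → l = l')
    (lab : Λ → Fin k → (Fin h ↪ Fin (2 ^ h)))
    (hcov : ∀ c : Fin k → β → (Fin h ↪ Fin (2 ^ h)),
      N ≤ {l : Λ | ∀ i, c i (pt l i) = lab l i}.ncard) :
    ∃ EF : Fin k × Fin m → Fin k × Fin m → Prop,
      IsMultipartiteTournament EF ∧
      (∀ i j : Fin k, ED i j →
        ∀ x y : Fin k × Fin m, x.1 = i → y.1 = j → ¬ EF y x) ∧
      (∀ ET : Fin k × Fin m → Fin k × Fin m → Prop, IsCompletion EF ET →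
        ∃ 𝓕 : Set (Fin h → Fin k × Fin m),
          N ≤ 𝓕.ncard ∧
          (∀ f ∈ 𝓕, Function.Injective f ∧ ∀ u v, EH u v → ET (f u) (f v)) ∧
          (∀ x y : Fin k × Fin m, EF x y →
            ∀ f ∈ 𝓕, ∀ g ∈ 𝓕,
              x ∈ Set.range f → y ∈ Set.range f →
              x ∈ Set.range g → y ∈ Set.range g → f = g)) := by
  classical
  -- the copy of `H` that the line `l` yields when its guess is correct
  let F : Λ → Fin h → Fin k × Fin m :=
    fun l u => (col u, emb (pt l (col u), lab l (col u) (r u)))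
  have hFpt : ∀ {l l' u u'}, F l u = F l' u' → col u = col u' ∧ pt l (col u) = pt l' (col u) := by
    intro l l' u u' he
    have h1 : col u = col u' := congrArg Prod.fst he
    have h2 := emb.injective (congrArg Prod.snd he)
    refine ⟨h1, ?_⟩
    have h3 := congrArg Prod.fst h2
    simp only at h3
    rw [← h1] at h3
    exact h3
  have hFinj : ∀ l, Function.Injective (F l) := by
    intro l u u' he
    have h1 : col u = col u' := congrArg Prod.fst he
    have h2 := congrArg Prod.snd (emb.injective (congrArg Prod.snd he))
    simp only at h2
    rw [← h1] at h2
    exact r.injective ((lab l (col u)).injective h2)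
  have hFline : ∀ {l l' u u' v v'}, F l u = F l' u' → F l v = F l' v' → col u ≠ col v →
      l = l' := fun h1 h2 hne => hlin _ _ _ _ hne (hFpt h1).2 (hFpt h2).2
  -- the edges between parts forced by the guesses
  let P : Fin k × Fin m → Fin k × Fin m → Prop :=
    fun x y => ∃ l u v, EH u v ∧ col u ≠ col v ∧ x = F l u ∧ y = F l v
  have hPasymm : ∀ x y, P x y → ¬ P y x := by
    rintro x y ⟨l, u, v, huv, hne, rfl, rfl⟩ ⟨l', u', v', huv', -, h1, h2⟩
    obtain rfl := hFline h2 h1 hne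
    obtain rfl := hFinj l h1
    obtain rfl := hFinj l h2
    exact (hEH _ _ huv).2 huv'
  let D : Fin k → Fin k → Prop := fun i j => ED i j ∨ (¬ ED j i ∧ i < j)
  have hDt : ∀ i j, i ≠ j → (D i j ↔ ¬ D j i) := by
    intro i j hij
    have h1 : ED i j → ¬ ED j i := fun h1 => (hED _ _ h1).2
    have h2 : i < j ↔ ¬ j < i := by
      rw [not_lt]; exact ⟨le_of_lt, fun h => lt_of_le_of_ne h hij⟩
    simp only [D]
    tauto
  refine ⟨fun x y => x.1 ≠ y.1 ∧ (P x y ∨ (¬ P y x ∧ D x.1 y.1)), ⟨fun x y hxy => hxy.1, ?_⟩,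
    ?_, ?_⟩
  · intro x y hxy
    have h1 := hPasymm x y
    have h2 := hDt _ _ hxy
    have h3 := hxy.symm
    clear_value P D
    clear hcov hlin hFpt hFinj hFline hPasymm hDt hEH hED hr hD hcol
    tauto
  · rintro i j hij x y rfl rfl ⟨hne, ⟨l, u, v, huv, -, rfl, rfl⟩ | ⟨-, hd⟩⟩
    · exact hD _ _ hij v u rfl rfl huv
    · rcases hd with hd | hd
      · exact (hED _ _ hij).2 hd
      · exact hd.1 hij
  · rintro ET ⟨hT, hTF⟩
    have hblock : ∀ (i : Fin k) (b : β), ∃ e : Fin h ↪ Fin (2 ^ h), ∀ s t, s < t →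
        ET (i, emb (b, e s)) (i, emb (b, e t)) := by
      intro i b
      refine exists_transitive (fun s t => ET (i, emb (b, s)) (i, emb (b, t)))
        ⟨fun s => hT.1 _, fun s t hst => hT.2 _ _ fun he => hst ?_⟩
      exact congrArg Prod.snd (emb.injective (congrArg Prod.snd he))
    choose c hc using hblock
    obtain ⟨u₀, v₀, huv₀⟩ := hcol
    refine ⟨F '' {l : Λ | ∀ i, c i (pt l i) = lab l i}, ?_, ?_, ?_⟩
    · rw [Set.ncard_image_of_injective]
      · exact hcov c
      · intro l l' he
        exact hFline (congrFun he u₀) (congrFun he v₀) huv₀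
    · rintro _ ⟨l, hl, rfl⟩
      refine ⟨hFinj l, fun u v huv => ?_⟩
      by_cases he : col u = col v
      · have h1 := hc (col u) (pt l (col u)) _ _ (hr u v he huv)
        rw [hl (col u)] at h1
        simp only [F]
        rw [← he]
        exact h1
      · exact (hTF _ _ he).2 ⟨he, Or.inl ⟨l, u, v, huv, he, rfl, rfl⟩⟩
    · rintro x y ⟨hne, -⟩ _ ⟨l, -, rfl⟩ _ ⟨l', -, rfl⟩ ⟨u, rfl⟩ ⟨v, rfl⟩ ⟨u', hu⟩ ⟨v', hv⟩
      rw [hFline hu.symm hv.symm hne]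

/-- The colouring can be taken to use at least two colours: a constant one is replaced by giving
the first vertex of a topological order its own colour `i₀`, where `ED` has no edge from the colour
`i₁` of the other vertices to `i₀`. -/
lemma exists_nonconstant_coloring {h k : ℕ} (hh : 2 ≤ h) (hk : 2 ≤ k)
    (EH : Fin h → Fin h → Prop)
    (ED : Fin k → Fin k → Prop) (hED : IsOrientedGraph ED) (col : Fin h → Fin k)
    (hac : ∀ i : Fin k, AcyclicOn EH {v | col v = i})
    (hD : ∀ i j : Fin k, ED i j → ∀ u v : Fin h, col u = i → col v = j → ¬ EH v u) :
    ∃ (col' : Fin h → Fin k) (r : Fin h ≃ Fin h),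
      (∀ u v, col' u = col' v → EH u v → r u < r v) ∧ (∃ u v, col' u ≠ col' v) ∧
      (∀ i j : Fin k, ED i j → ∀ u v : Fin h, col' u = i → col' v = j → ¬ EH v u) := by
  classical
  obtain ⟨r, hr⟩ := exists_topological_order EH col hac
  by_cases hcol : ∃ u v, col u ≠ col v
  · exact ⟨col, r, hr, hcol, hD⟩
  push Not at hcol
  obtain ⟨i₀, i₁, hne, hnd⟩ : ∃ i₀ i₁ : Fin k, i₀ ≠ i₁ ∧ ¬ ED i₁ i₀ := by
    have h01 : (⟨0, by omega⟩ : Fin k) ≠ ⟨1, by omega⟩ := by simp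
    by_cases h1 : ED ⟨1, by omega⟩ ⟨0, by omega⟩
    · exact ⟨_, _, h01.symm, (hED _ _ h1).2⟩
    · exact ⟨_, _, h01, h1⟩
  let z : Fin h := ⟨0, by omega⟩
  refine ⟨fun u => if r u = z then i₀ else i₁, r, fun u v _ => hr u v (hcol u v),
    ⟨r.symm z, r.symm ⟨1, by omega⟩, ?_⟩, ?_⟩
  · simpa [z] using hne
  · rintro i j hij u v rfl rfl huv
    have hlt := hr v u (hcol v u) huv
    have hu : r u ≠ z := fun h1 => by
      rw [h1] at hlt
      exact absurd hlt (Nat.not_lt_zero _)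
    simp only [if_neg hu] at hij
    split_ifs at hij with h1
    · exact hnd hij
    · exact (hED _ _ hij).1 rfl


/-- Lemma `force`. -/
theorem stmt3 (h : ℕ) (hh : 2 ≤ h) :
    ∃ (m₀ : ℕ) (γ : ℝ), 0 < γ ∧
      ∀ k : ℕ, 2 ≤ k → k ≤ h →
        ∀ EH : Fin h → Fin h → Prop, IsOrientedGraph EH →
          ∀ ED : Fin k → Fin k → Prop, IsOrientedGraph ED →
            ∀ col : Fin h → Fin k,
              (∀ i : Fin k, AcyclicOn EH {v | col v = i}) →
              (∀ i j : Fin k, ED i j → ∀ u v : Fin h, col u = i → col v = j → ¬ EH v u) →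
              ∀ m : ℕ, m₀ ≤ m →
                ∃ EF : Fin k × Fin m → Fin k × Fin m → Prop,
                  IsMultipartiteTournament EF ∧
                  (∀ i j : Fin k, ED i j →
                    ∀ x y : Fin k × Fin m, x.1 = i → y.1 = j → ¬ EF y x) ∧
                  (∀ ET : Fin k × Fin m → Fin k × Fin m → Prop, IsCompletion EF ET →
                    ∃ 𝓕 : Set (Fin h → Fin k × Fin m),
                      γ * (m : ℝ) ^ 2 ≤ (𝓕.ncard : ℝ) ∧
                      (∀ f ∈ 𝓕, Function.Injective f ∧ ∀ u v, EH u v → ET (f u) (f v)) ∧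
                      (∀ x y : Fin k × Fin m, EF x y →
                        ∀ f ∈ 𝓕, ∀ g ∈ 𝓕,
                          x ∈ Set.range f → y ∈ Set.range f →
                          x ∈ Set.range g → y ∈ Set.range g → f = g)) := by
  classical
  have : Nonempty (Fin h ↪ Fin (2 ^ h)) :=
    Function.Embedding.nonempty_of_card_le (by simpa using Nat.lt_two_pow_self.le)
  obtain ⟨p, hp, hhp, g, hg⟩ := exists_guess h (Fin h ↪ Fin (2 ^ h))
  have := Fact.mk hp
  set M := p * 2 ^ h with hM
  have hMpos : 0 < M := Nat.mul_pos hp.pos (by positivity)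
  refine ⟨2 * M * h, 1 / (4 * (M : ℝ) ^ 2), by positivity, ?_⟩
  intro k hk hkh EH hEH ED hED col₀ hac hD₀ m hm
  obtain ⟨col, r, hr, hcol, hD⟩ := exists_nonconstant_coloring hh hk EH ED hED col₀ hac hD₀
  have hn : h ≤ m / (2 * M) := (Nat.le_div_iff_mul_le (by positivity)).2 (by linarith)
  -- a prime of order `m / M`, by the postulate of Bertrand
  obtain ⟨q, hq, hnq, hq2⟩ := Nat.exists_prime_lt_and_le_two_mul (m / (2 * M)) (by omega)
  have := Fact.mk hq
  have hqm : p * q * 2 ^ h ≤ m := by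
    calc p * q * 2 ^ h = M * q := by rw [hM]; ring
      _ ≤ M * (2 * (m / (2 * M))) := Nat.mul_le_mul_left _ hq2
      _ = m / (2 * M) * (2 * M) := by ring
      _ ≤ m := Nat.div_mul_le_self _ _
  have hmq : m < 2 * M * q := by
    have := Nat.lt_mul_of_div_lt hnq (show 0 < 2 * M by positivity)
    linarith
  obtain ⟨emb⟩ : Nonempty ((ZMod p × ZMod q) × Fin (2 ^ h) ↪ Fin m) :=
    Function.Embedding.nonempty_of_card_le (by simpa [ZMod.card] using hqm)
  -- lines over the ring `ZMod p × ZMod q`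
  let pt : (ZMod p × ZMod p) × (ZMod q × ZMod q) → Fin k → ZMod p × ZMod q :=
    fun l i => (l.1.1 + (i : ℕ) * l.1.2, l.2.1 + (i : ℕ) * l.2.2)
  have hlin : ∀ l l' i j, i ≠ j → pt l i = pt l' i → pt l j = pt l' j → l = l' := by
    rintro ⟨⟨a, b⟩, ⟨c, d⟩⟩ ⟨⟨a', b'⟩, ⟨c', d'⟩⟩ i j hij h1 h2
    simp only [pt, Prod.mk.injEq] at h1 h2
    have hi : (i : ℕ) < h := lt_of_lt_of_le i.2 hkh
    have hj : (j : ℕ) < h := lt_of_lt_of_le j.2 hkh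
    have hij' : (i : ℕ) ≠ j := fun h3 => hij (Fin.ext h3)
    obtain ⟨rfl, rfl⟩ := line_unique hp hhp hi hj hij' h1.1 h2.1
    obtain ⟨rfl, rfl⟩ := line_unique hq (by omega) hi hj hij' h1.2 h2.2
    rfl
  have hcov : ∀ c : Fin k → ZMod p × ZMod q → (Fin h ↪ Fin (2 ^ h)),
      q ^ 2 ≤ {l : (ZMod p × ZMod p) × (ZMod q × ZMod q) |
        ∀ i, c i (pt l i) = g l.1 (Fin.castLE hkh i)}.ncard := by
    intro c
    have hex : ∀ w : ZMod q × ZMod q, ∃ l : ZMod p × ZMod p,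
        ∀ i : Fin k, c i (pt (l, w) i) = g l (Fin.castLE hkh i) := by
      intro w
      -- restrict `c` to the blocks over the line `w`, with junk colours on the indices `≥ k`
      obtain ⟨l, hl⟩ := hg fun i s =>
        if hi : (i : ℕ) < k then c ⟨i, hi⟩ (s, w.1 + (i : ℕ) * w.2) else Classical.arbitrary _
      refine ⟨l, fun i => ?_⟩
      have := hl (Fin.castLE hkh i)
      simpa using this
    choose L hL using hex
    have hinj : Function.Injective fun w : ZMod q × ZMod q => (L w, w) :=
      fun w w' he => congrArg Prod.snd he
    calc q ^ 2 = (Set.range fun w : ZMod q × ZMod q => (L w, w)).ncard := by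
          rw [← Set.image_univ, Set.ncard_image_of_injective _ hinj, Set.ncard_univ]
          simp [Nat.card_eq_fintype_card, ZMod.card, sq]
      _ ≤ _ := by
          refine Set.ncard_le_ncard ?_ (Set.toFinite _)
          rintro _ ⟨w, rfl⟩
          exact hL w
  obtain ⟨EF, h1, h2, h3⟩ := forced_of_lines EH hEH ED hED col r hr hcol hD emb pt hlin
    (fun l i => g l.1 (Fin.castLE hkh i)) hcov
  refine ⟨EF, h1, h2, fun ET hET => ?_⟩
  obtain ⟨𝓕, h4, h5, h6⟩ := h3 ET hET
  refine ⟨𝓕, ?_, h5, h6⟩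
  have hMR : (0 : ℝ) < M := by exact_mod_cast hMpos
  have h7 : (m : ℝ) ≤ 2 * M * q := by exact_mod_cast hmq.le
  have h8 : ((q : ℝ)) ^ 2 ≤ 𝓕.ncard := by exact_mod_cast h4
  refine le_trans ?_ h8
  rw [one_div, inv_mul_le_iff₀ (by positivity)]
  calc (m : ℝ) ^ 2 ≤ (2 * M * q) ^ 2 := by gcongr
    _ = 4 * (M : ℝ) ^ 2 * (q : ℝ) ^ 2 := by ring
end

section
/- For every 2-colorable oriented graph H there is a bipartite tournament F that forces H; that is, every completion of F contains a copy of H. -/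
/-- A bipartite tournament on `A ⊕ B`: no edges inside a part, and exactly one
directed edge between any vertex of `A` and any vertex of `B`. -/
def IsBipTournament {A B : Type*} (E : A ⊕ B → A ⊕ B → Prop) : Prop :=
  (∀ x y, E x y → x.isLeft ≠ y.isLeft) ∧
  (∀ x y : A ⊕ B, x.isLeft ≠ y.isLeft → (E x y ↔ ¬ E y x))

/-- A completion of a bipartite tournament: a tournament agreeing with it on all
pairs of vertices lying in different parts. -/
def IsBipCompletion {A B : Type*} (EF ET : A ⊕ B → A ⊕ B → Prop) : Prop :=
  IsTournament ET ∧ ∀ x y : A ⊕ B, x.isLeft ≠ y.isLeft → (ET x y ↔ EF x y)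

/-- A tournament on `2 ^ n` vertices contains a transitive tournament on `n` vertices, listed here
in its order. -/
theorem IsTournament.exists_transitive {V : Type*} {E : V → V → Prop} (hE : IsTournament E) (n : ℕ) :
    ∀ S : Finset V, 2 ^ n ≤ S.card →
      ∃ l : List V, l.length = n ∧ (∀ x ∈ l, x ∈ S) ∧ l.Pairwise E := by
  classical
  induction n with
  | zero => exact fun S _ => ⟨[], by simp⟩
  | succ n ih =>
    intro S hS
    have h2 : 1 ≤ 2 ^ n := Nat.one_le_two_pow
    rw [pow_succ] at hS
    obtain ⟨v, hv⟩ : S.Nonempty := Finset.card_pos.mp (by omega)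
    have hc := Finset.card_erase_of_mem hv
    have hs := Finset.card_filter_add_card_filter_not (s := S.erase v) (fun x => E v x)
    by_cases hb : 2 ^ n ≤ ((S.erase v).filter (fun x => E v x)).card
    · obtain ⟨l, hl, hm, hp⟩ := ih _ hb
      simp only [Finset.mem_filter, Finset.mem_erase] at hm
      refine ⟨v :: l, by simp [hl], ?_, ?_⟩
      · simp only [List.mem_cons]
        rintro x (rfl | hx)
        · exact hv
        · exact (hm x hx).1.2
      · exact List.pairwise_cons.mpr ⟨fun x hx => (hm x hx).2, hp⟩
    · obtain ⟨l, hl, hm, hp⟩ := ih ((S.erase v).filter (fun x => ¬ E v x)) (by omega)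
      simp only [Finset.mem_filter, Finset.mem_erase] at hm
      refine ⟨l ++ [v], by simp [hl], ?_, ?_⟩
      · simp only [List.mem_append, List.mem_singleton]
        rintro x (hx | rfl)
        · exact (hm x hx).1.2
        · exact hv
      · refine List.pairwise_append.mpr ⟨hp, by simp, ?_⟩
        simp only [List.mem_singleton]
        rintro x hx _ rfl
        exact (hE.2 x _ (hm x hx).1.1).mpr (hm x hx).2

/-- An acyclic relation on a finite type has a topological ordering. -/
theorem exists_topological_order_s5 {U : Type*} [Fintype U] {R : U → U → Prop}
    (hR : ∀ x, ¬ Relation.TransGen R x x) {h : ℕ} (hU : Fintype.card U = h) :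
    ∃ r : U → Fin h, Function.Injective r ∧ ∀ u v, R u v → r u < r v := by
  classical
  have : IsPartialOrder U (Relation.ReflTransGen R) :=
    { refl := fun _ => .refl
      trans := fun _ _ _ => .trans
      antisymm := by
        intro a b hab hba
        by_contra hne
        rcases Relation.reflTransGen_iff_eq_or_transGen.mp hab with e | t
        · exact hne e.symm
        · exact hR a (t.trans_left hba) }
  obtain ⟨s, hs, hle⟩ := extend_partialOrder (Relation.ReflTransGen R)
  let lo : LinearOrder U :=
    { le := s
      le_refl := fun a => hs.refl a
      le_trans := fun a b c => hs.trans a b c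
      le_antisymm := fun a b => hs.antisymm a b
      le_total := fun a b => hs.total a b
      toDecidableLE := Classical.decRel _ }
  let f := monoEquivOfFin U hU
  refine ⟨f.symm, f.symm.injective, fun u v huv => ?_⟩
  have hne : u ≠ v := by
    rintro rfl
    exact hR u (.single huv)
  exact lt_of_le_of_ne (f.symm.monotone (hle _ _ (.single huv))) (f.symm.injective.ne hne)

/-- A tournament on `2 ^ h` vertices contains every acyclic digraph on `h` vertices. -/
theorem IsTournament.exists_embedding {h : ℕ} {R : Fin h → Fin h → Prop}
    (hR : ∀ x, ¬ Relation.TransGen R x x) {E : Fin (2 ^ h) → Fin (2 ^ h) → Prop}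
    (hE : IsTournament E) :
    ∃ g : Fin h → Fin (2 ^ h), Function.Injective g ∧ ∀ u v, R u v → E (g u) (g v) := by
  obtain ⟨l, hl, -, hp⟩ := hE.exists_transitive h Finset.univ (by simp)
  obtain ⟨r, hr, hrR⟩ := exists_topological_order_s5 hR (Fintype.card_fin h)
  rw [List.pairwise_iff_get] at hp
  refine ⟨fun u => l.get ((r u).cast hl.symm), ?_, fun u v huv => hp _ _ (hrR u v huv)⟩
  intro u v huv
  beta_reduce at huv
  apply hr
  -- a strict inequality of positions would make the common entry a loop of `E`
  rcases lt_trichotomy (r u) (r v) with hlt | heq | hlt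
  · have := hp ((r u).cast hl.symm) ((r v).cast hl.symm) hlt
    rw [huv] at this
    exact absurd this (hE.1 _)
  · exact heq
  · have := hp ((r v).cast hl.symm) ((r u).cast hl.symm) hlt
    rw [huv] at this
    exact absurd this (hE.1 _)

/-- The vertices of the left part: a block of `2 ^ h` vertices for each Boolean relation on the
`2 ^ h` labels. -/
abbrev BlockVertex (h : ℕ) : Type :=
  (Fin (2 ^ h) → Fin (2 ^ h) → Bool) × Fin (2 ^ h)

/-- The vertices of the right part: a label together with an adjacency pattern to the left part. -/
abbrev PatternVertex (h : ℕ) : Type :=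
  Fin (2 ^ h) × (BlockVertex h → Bool)

/-- The bipartite tournament in which a pattern vertex `(l, φ)` receives an edge from `m` when
`φ m` is true, and sends an edge to `m` otherwise. -/
def patternEdge (h : ℕ) : BlockVertex h ⊕ PatternVertex h → BlockVertex h ⊕ PatternVertex h → Prop
  | .inl m, .inr n => n.2 m = true
  | .inr n, .inl m => n.2 m = false
  | _, _ => False

theorem patternEdge_isBipTournament (h : ℕ) : IsBipTournament (patternEdge h) := by
  constructor
  · rintro (x | x) (y | y) <;> simp [patternEdge]
  · rintro (x | x) (y | y) <;> simp [patternEdge]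

/-- The forcing property. The gluing `φ l` of the patterns required on all blocks is chosen before
the tournament `τ` that the vertices `(l, φ l)` induce is known; the block of `τ` is then used. -/
theorem hasCopy_of_isBipCompletion_patternEdge {h : ℕ} {EH : Fin h → Fin h → Prop}
    (hH : IsOrientedGraph EH) (h2 : KColorable EH 2)
    {ET : BlockVertex h ⊕ PatternVertex h → BlockVertex h ⊕ PatternVertex h → Prop}
    (hET : IsBipCompletion (patternEdge h) ET) : HasCopy EH ET := by
  classical
  obtain ⟨c, hc⟩ := h2
  obtain ⟨hT, hF⟩ := hET
  have hR : ∀ x, ¬ Relation.TransGen (fun u v => c u = c v ∧ EH u v) x x := by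
    intro x hx
    -- a monochromatic cycle stays inside the colour class of its starting vertex
    have key : ∀ y, Relation.TransGen (fun u v => c u = c v ∧ EH u v) x y → c y = c x ∧
        Relation.TransGen (fun a b => a ∈ {v | c v = c x} ∧ b ∈ {v | c v = c x} ∧ EH a b) x y := by
      intro y hy
      induction hy with
      | single hxy => exact ⟨hxy.1.symm, .single ⟨rfl, hxy.1.symm, hxy.2⟩⟩
      | tail _ hyz ih =>
        have hz := hyz.1.symm.trans ih.1
        exact ⟨hz, ih.2.tail ⟨ih.1, hz, hyz.2⟩⟩
    exact hc (c x) x (key x hx).2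
  have hM : ∀ τ : Fin (2 ^ h) → Fin (2 ^ h) → Bool, ∃ g : Fin h → Fin (2 ^ h),
      Function.Injective g ∧
        ∀ u v, (c u = c v ∧ EH u v) → ET (.inl (τ, g u)) (.inl (τ, g v)) := by
    intro τ
    refine IsTournament.exists_embedding hR
      (E := fun a b => ET (.inl (τ, a)) (.inl (τ, b))) ⟨fun _ => hT.1 _, ?_⟩
    intro a b hab
    exact hT.2 _ _ (by simpa using hab)
  -- relations `τ` that are not tournaments play no role and get an arbitrary map
  have hN : ∀ τ : Fin (2 ^ h) → Fin (2 ^ h) → Bool, ∃ g : Fin h → Fin (2 ^ h),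
      IsTournament (fun a b => τ a b = true) → (Function.Injective g ∧
        ∀ u v, (c u = c v ∧ EH u v) → τ (g u) (g v) = true) := by
    intro τ
    by_cases ht : IsTournament (fun a b => τ a b = true)
    · obtain ⟨g, hg⟩ := ht.exists_embedding hR
      exact ⟨g, fun _ => hg⟩
    · exact ⟨fun _ => ⟨0, by positivity⟩, fun h' => absurd h' ht⟩
  choose gM hgM hgM' using hM
  choose gN hgN using hN
  let φ : Fin (2 ^ h) → BlockVertex h → Bool := fun l m =>
    decide (∃ u v, gM m.1 u = m.2 ∧ gN m.1 v = l ∧ EH u v)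
  let τ : Fin (2 ^ h) → Fin (2 ^ h) → Bool := fun a b =>
    decide (ET (.inr (a, φ a)) (.inr (b, φ b)))
  have hτ : IsTournament (fun a b => τ a b = true) := by
    refine ⟨fun a => by simpa [τ] using hT.1 _, fun a b hab => ?_⟩
    simpa [τ] using hT.2 (.inr (a, φ a)) (.inr (b, φ b)) (by simp [hab])
  obtain ⟨hinj, hadj⟩ := hgN τ hτ
  refine ⟨fun u => if c u = 0 then .inl (τ, gM τ u) else .inr (gN τ u, φ (gN τ u)), ?_, ?_⟩
  · intro u v huv
    by_cases hu : c u = 0 <;> by_cases hv : c v = 0 <;> simp [hu, hv] at huv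
    · exact hgM τ huv
    · exact hinj huv.1
  · intro u v huv
    by_cases hu : c u = 0 <;> by_cases hv : c v = 0 <;> simp only [hu, hv, if_true, if_false]
    · exact hgM' τ u v ⟨hu.trans hv.symm, huv⟩
    · rw [hF _ _ (by simp)]
      simp only [patternEdge, φ, decide_eq_true_eq]
      exact ⟨u, v, rfl, rfl, huv⟩
    · rw [hF _ _ (by simp)]
      simp only [patternEdge, φ, decide_eq_false_iff_not]
      rintro ⟨v', u', hv', hu', hvu⟩
      obtain rfl := hgM τ hv'
      obtain rfl := hinj hu'
      exact (hH _ _ huv).2 hvu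
    · have := hadj u v ⟨by omega, huv⟩
      simpa [τ] using this

/-- every 2-colorable oriented graph is forced by some bipartite
tournament. -/
theorem stmt5 (h : ℕ) (EH : Fin h → Fin h → Prop) (hH : IsOrientedGraph EH)
    (h2 : KColorable EH 2) :
    ∃ (m₁ m₂ : ℕ) (EF : Fin m₁ ⊕ Fin m₂ → Fin m₁ ⊕ Fin m₂ → Prop),
      IsBipTournament EF ∧
      ∀ ET : Fin m₁ ⊕ Fin m₂ → Fin m₁ ⊕ Fin m₂ → Prop,
        IsBipCompletion EF ET → HasCopy EH ET := by
  let e := Equiv.sumCongr (Fintype.equivFin (BlockVertex h)) (Fintype.equivFin (PatternVertex h))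
  have he : ∀ x, (e x).isLeft = x.isLeft := by rintro (x | x) <;> rfl
  have he' : ∀ x, (e.symm x).isLeft = x.isLeft := fun x => by rw [← he, e.apply_symm_apply]
  obtain ⟨hb1, hb2⟩ := patternEdge_isBipTournament h
  refine ⟨_, _, fun x y => patternEdge h (e.symm x) (e.symm y), ⟨?_, ?_⟩, ?_⟩
  · intro x y hxy
    simpa only [he'] using hb1 _ _ hxy
  · intro x y hxy
    exact hb2 _ _ (by simpa only [he'] using hxy)
  · rintro ET ⟨⟨hT1, hT2⟩, hF⟩
    obtain ⟨f, hf, hf'⟩ := hasCopy_of_isBipCompletion_patternEdge hH h2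
      (ET := fun x y => ET (e x) (e y))
      ⟨⟨fun x => hT1 _, fun x y hxy => hT2 _ _ (e.injective.ne hxy)⟩, fun x y hxy => by
        simpa only [e.symm_apply_apply] using hF (e x) (e y) (by simpa only [he] using hxy)⟩
    exact ⟨fun u => e (f u), e.injective.comp hf, hf'⟩
end

section
/- For every h ≥ 1 there are η = η(h) > 0 and α = α(h) > 0 such that the following holds for every oriented graph H on h vertices. Let H₁,…,H_ℓ be a partition of V(H) such that each H_i induces an acyclic subdigraph, and such that for every 1 ≤ i < j ≤ ℓ, either H_i → H_j or H_j → H_i. Let W₁,…,W_ℓ be pairwise-disjoint vertex sets in a tournament T satisfying: (1) |W_i| ≥ 2^{h−1} for every 1 ≤ i ≤ ℓ; (2) for every 1 ≤ i ≠ j ≤ ℓ, if H_i → H_j then d(W_i, W_j) ≥ 1 − η. Then T contains at least α · ∏_{i=1}^{ℓ} |W_i|^{h_i} copies of H, where h_i = |H_i|. -/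
/-- The edge density `d(X,Y) = e(X,Y)/(|X||Y|)` between disjoint vertex sets of a
tournament. -/
noncomputable def eDens {V : Type*} (ET : V → V → Prop) (X Y : Finset V) : ℝ :=
  (Set.ncard {p : V × V | p.1 ∈ X ∧ p.2 ∈ Y ∧ ET p.1 p.2} : ℝ) /
    ((X.card : ℝ) * (Y.card : ℝ))


open Finset

/-! ### Acyclic digraphs in tournaments -/

/-- A rank function of an acyclic digraph: the number of vertices from which a given one can be
reached. -/
lemma exists_rank {U : Type*} [Finite U] {E : U → U → Prop} {S : Set U} (hS : AcyclicOn E S) :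
    ∃ r : U → ℕ, ∀ u ∈ S, ∀ v ∈ S, E u v → r u < r v := by
  refine ⟨fun u => Set.ncard {w | Relation.TransGen (fun a b => a ∈ S ∧ b ∈ S ∧ E a b) w u}, ?_⟩
  intro u hu v hv huv
  apply Set.ncard_lt_ncard _ (Set.toFinite _)
  refine ⟨fun w hw => Relation.TransGen.tail hw ⟨hu, hv, huv⟩, fun hsub => ?_⟩
  exact hS u (hsub (Relation.TransGen.single ⟨hu, hv, huv⟩))

/-- A digraph on `S` with a rank function embeds into every tournament on at least `2 ^ (#S - 1)`
vertices; the condition `2 ^ n ≤ 2 * #X + 1` says the same for `n > 0` and is void for `n = 0`, so it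
passes to the neighbourhoods in the induction. A vertex `a` of the tournament has either a large out-neighbourhood, and then a source
of `S` is sent to `a`, or a large in-neighbourhood, and then a sink is. -/
lemma embed_acyclic {U V : Type*} [DecidableEq U] [DecidableEq V] (E : U → U → Prop)
    (F : V → V → Prop) (hF : ∀ a b, a ≠ b → F a b ∨ F b a) (r : U → ℕ) (n : ℕ) :
    ∀ (S : Finset U) (X : Finset V), #S = n → (∀ u ∈ S, ∀ v ∈ S, E u v → r u < r v) →
      2 ^ n ≤ 2 * #X + 1 →
      ∃ f : S → X, Function.Injective f ∧ ∀ u v : S, E u v → F (f u) (f v) := by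
  classical
  induction n with
  | zero =>
    intro S X hS _ _
    have : IsEmpty S := by
      rw [Finset.card_eq_zero] at hS
      subst hS
      exact ⟨fun u => absurd u.2 (Finset.notMem_empty _)⟩
    exact ⟨isEmptyElim, fun u => isEmptyElim u, fun u => isEmptyElim u⟩
  | succ n ih =>
    intro S X hS hr hX
    have hSne : S.Nonempty := Finset.card_pos.mp (by omega)
    have hpow : 2 ^ (n + 1) = 2 * 2 ^ n := by ring
    have hpow_pos : 0 < 2 ^ n := by positivity
    have hXpos : 0 < #X := by omega
    obtain ⟨a, ha⟩ := Finset.card_pos.mp hXpos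
    set X₁ := (X.erase a).filter (fun b => F a b) with hX₁
    set X₂ := (X.erase a).filter (fun b => ¬ F a b) with hX₂
    have hcard : #X₁ + #X₂ = #X - 1 := by
      rw [hX₁, hX₂, Finset.card_filter_add_card_filter_not, Finset.card_erase_of_mem ha]
    -- A common extension step, for the vertex `t` sent to `a`.
    have key : ∀ t ∈ S, ∀ Y : Finset V, Y ⊆ X.erase a → 2 ^ n ≤ 2 * #Y + 1 →
        (∀ u ∈ S, ∀ b ∈ Y, (E t u → F a b) ∧ (E u t → F b a)) →
        ∃ f : S → X, Function.Injective f ∧ ∀ u v : S, E u v → F (f u) (f v) := by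
      intro t ht Y hY hYc hYF
      have hc : #(S.erase t) = n := by rw [Finset.card_erase_of_mem ht]; omega
      obtain ⟨g, hg, hgE⟩ := ih (S.erase t) Y hc
        (fun u hu v hv => hr u (Finset.mem_of_mem_erase hu) v (Finset.mem_of_mem_erase hv)) hYc
      have hgX : ∀ u, (g u : V) ∈ X ∧ (g u : V) ≠ a := fun u =>
        ⟨Finset.mem_of_mem_erase (hY (g u).2), Finset.ne_of_mem_erase (hY (g u).2)⟩
      refine ⟨fun u => if hu : (u : U) = t then ⟨a, ha⟩ else
        ⟨g ⟨u, Finset.mem_erase.mpr ⟨hu, u.2⟩⟩, (hgX _).1⟩, ?_, ?_⟩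
      · intro u v huv
        by_cases hu : (u : U) = t <;> by_cases hv : (v : U) = t
        · exact Subtype.ext (hu.trans hv.symm)
        · simp only [hu, hv, dite_true, dite_false, Subtype.mk.injEq] at huv
          exact absurd huv.symm (hgX _).2
        · simp only [hu, hv, dite_true, dite_false, Subtype.mk.injEq] at huv
          exact absurd huv (hgX _).2
        · simp only [hu, hv, dite_false, Subtype.mk.injEq] at huv
          have := hg (Subtype.ext huv)
          exact Subtype.ext (congrArg (fun z : {z // z ∈ S.erase t} => (z : U)) this)
      · intro u v huv
        by_cases hu : (u : U) = t <;> by_cases hv : (v : U) = t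
        · have := hr u u.2 v v.2 huv
          rw [hu, hv] at this
          exact absurd this (lt_irrefl _)
        · simp only [hu, hv, dite_true, dite_false]
          exact (hYF v v.2 _ (g _).2).1 (hu ▸ huv)
        · simp only [hu, hv, dite_true, dite_false]
          exact (hYF u u.2 _ (g _).2).2 (hv ▸ huv)
        · simp only [hu, hv, dite_false]
          exact hgE _ _ huv
    rcases (by omega : 2 ^ n ≤ 2 * #X₁ + 1 ∨ 2 ^ n ≤ 2 * #X₂ + 1) with h1 | h2
    · obtain ⟨t, ht, hmin⟩ := Finset.exists_min_image S r hSne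
      refine key t ht X₁ (Finset.filter_subset _ _) h1 fun u hu b hb => ⟨fun _ => ?_, fun hE => ?_⟩
      · exact (Finset.mem_filter.mp hb).2
      · exact absurd (hr u hu t ht hE) (not_lt.mpr (hmin u hu))
    · obtain ⟨t, ht, hmax⟩ := Finset.exists_max_image S r hSne
      refine key t ht X₂ (Finset.filter_subset _ _) h2 fun u hu b hb => ⟨fun hE => ?_, fun _ => ?_⟩
      · exact absurd (hr t ht u hu hE) (not_lt.mpr (hmax u hu))
      · obtain ⟨hb1, hb2⟩ := Finset.mem_filter.mp hb
        exact (hF a b (Finset.ne_of_mem_erase hb1).symm).resolve_left hb2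

/-! ### Counting choices of points -/

/-- For `x` uniform in the product of the sets `A p`, the probability that the subfamily indexed by
`s` lies in `C` is at most `#C / ∏ k, #(A (s k))`. The injection replaces the entries of `x`
at the indices `s k` by given ones and records the entries removed. -/
lemma card_comp_mem_mul_le {κ τ V : Type*} [Fintype κ] [DecidableEq κ] [Fintype τ]
    [DecidableEq τ] [DecidableEq V] (A : τ → Finset V) (s : κ → τ) (hs : Function.Injective s)
    (C : Finset (κ → V)) :
    #{x ∈ Fintype.piFinset A | x ∘ s ∈ C} * ∏ k, #(A (s k)) ≤ #C * ∏ p, #(A p) := by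
  classical
  rw [← Fintype.card_piFinset A, ← Fintype.card_piFinset (fun k => A (s k)),
    ← Finset.card_product, ← Finset.card_product]
  refine Finset.card_le_card_of_injOn
    (fun z => (z.1 ∘ s, Function.extend s z.2 z.1)) ?_ ?_
  · rintro ⟨x, y⟩ hxy
    simp only [Finset.coe_product, Set.mem_prod, Finset.mem_coe, Finset.mem_filter,
      Fintype.mem_piFinset] at hxy ⊢
    refine ⟨hxy.1.2, fun p => ?_⟩
    by_cases hp : ∃ k, s k = p
    · obtain ⟨k, rfl⟩ := hp
      rw [hs.extend_apply]
      exact hxy.2 k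
    · rw [Function.extend_apply' _ _ _ hp]
      exact hxy.1.1 p
  · rintro ⟨x, y⟩ _ ⟨x', y'⟩ _ heq
    simp only [Prod.mk.injEq] at heq
    obtain ⟨h1, h2⟩ := heq
    refine Prod.ext (funext fun p => ?_) (funext fun k => ?_)
    · by_cases hp : ∃ k, s k = p
      · obtain ⟨k, rfl⟩ := hp
        exact congrFun h1 k
      · have := congrFun h2 p
        rwa [Function.extend_apply' _ _ _ hp, Function.extend_apply' _ _ _ hp] at this
    · have := congrFun h2 (s k)
      rwa [hs.extend_apply, hs.extend_apply] at this

lemma exists_pieces {V : Type*} [DecidableEq V] (m : ℕ) (hm : 0 < m) (W : Finset V)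
    (hW : m ≤ #W) :
    ∃ A : Fin m → Finset V, (∀ k, A k ⊆ W) ∧ (∀ k l, k ≠ l → Disjoint (A k) (A l)) ∧
      ∀ k, #W ≤ 2 * m * #(A k) := by
  have hq : 1 ≤ #W / m := (Nat.one_le_div_iff hm).mpr hW
  obtain ⟨e⟩ : Nonempty (Fin m × Fin (#W / m) ↪ W) := by
    apply Function.Embedding.nonempty_of_card_le
    simp only [Fintype.card_prod, Fintype.card_fin, Fintype.card_coe]
    exact Nat.mul_div_le _ _
  refine ⟨fun k => Finset.univ.image fun a => (e (k, a) : V), ?_, ?_, ?_⟩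
  · intro k v hv
    obtain ⟨a, -, rfl⟩ := Finset.mem_image.mp hv
    exact (e (k, a)).2
  · intro k l hkl
    rw [Finset.disjoint_left]
    intro v hv hv'
    obtain ⟨a, -, rfl⟩ := Finset.mem_image.mp hv
    obtain ⟨b, -, hb⟩ := Finset.mem_image.mp hv'
    have := e.injective (Subtype.ext hb)
    exact hkl (congrArg Prod.fst this).symm
  · intro k
    rw [Finset.card_image_of_injective]
    · rw [Finset.card_univ, Fintype.card_fin]
      have := Nat.lt_mul_div_succ #W hm
      nlinarith
    · intro a b hab
      have := e.injective (Subtype.ext hab)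
      exact congrArg Prod.snd this

/-- High density means few non-edges. -/
lemma nonedges_le {V : Type*} [DecidableEq V] (ET : V → V → Prop) [DecidableRel ET]
    (X Y : Finset V) (hX : 0 < #X) (hY : 0 < #Y) (η : ℝ) (hd : 1 - η ≤ eDens ET X Y) :
    (#{p ∈ X ×ˢ Y | ¬ ET p.1 p.2} : ℝ) ≤ η * (#X * #Y) := by
  have hset : {p : V × V | p.1 ∈ X ∧ p.2 ∈ Y ∧ ET p.1 p.2} =
      (({p ∈ X ×ˢ Y | ET p.1 p.2} : Finset (V × V)) : Set (V × V)) := by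
    ext p
    simp [and_assoc]
  have hX' : (0 : ℝ) < #X := by exact_mod_cast hX
  have hY' : (0 : ℝ) < #Y := by exact_mod_cast hY
  rw [eDens, hset, Set.ncard_coe_finset, le_div_iff₀ (by positivity)] at hd
  have hsum := Finset.card_filter_add_card_filter_not (s := X ×ˢ Y) (fun p => ET p.1 p.2)
  rw [Finset.card_product] at hsum
  have hsum' : (#{p ∈ X ×ˢ Y | ET p.1 p.2} : ℝ) + #{p ∈ X ×ˢ Y | ¬ ET p.1 p.2} = #X * #Y := by
    exact_mod_cast hsum
  linarith

/-! ### Copies of the whole graph -/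

/-- An injective choice of `2 ^ (h - 1)` points per class, with all the required edges between
different classes, contains a copy of `H` that respects the classes. -/
lemma exists_slots {h : ℕ} {ι V : Type*} [DecidableEq ι] (EH : Fin h → Fin h → Prop)
    (col : Fin h → ι) (hac : ∀ i, AcyclicOn EH {v | col v = i}) (ET : V → V → Prop)
    (hT : IsTournament ET) (x : ι × Fin (2 ^ (h - 1)) → V) (hx : Function.Injective x)
    (hcross : ∀ u v, col u ≠ col v → EH u v → ∀ k l, ET (x (col u, k)) (x (col v, l))) :
    ∃ s : Fin h → Fin (2 ^ (h - 1)), Function.Injective (fun u => x (col u, s u)) ∧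
      ∀ u v, EH u v → ET (x (col u, s u)) (x (col v, s v)) := by
  classical
  have hstep : ∀ i, ∃ f : {u // u ∈ ({u | col u = i} : Finset (Fin h))} →
      (Finset.univ : Finset (Fin (2 ^ (h - 1)))), Function.Injective f ∧
      ∀ u v : {u // u ∈ ({u | col u = i} : Finset (Fin h))},
        EH u v → ET (x (i, f u)) (x (i, f v)) := by
    intro i
    obtain ⟨r, hr⟩ := exists_rank (hac i)
    refine embed_acyclic EH (fun k l => ET (x (i, k)) (x (i, l))) ?_ r _ _ _ rfl ?_ ?_
    · intro a b hab
      have hne : x (i, b) ≠ x (i, a) := fun hh => hab (by simpa using (hx hh).symm)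
      by_cases hba : ET (x (i, b)) (x (i, a))
      · exact Or.inr hba
      · exact Or.inl ((hT.2 _ _ hne.symm).mpr hba)
    · intro u hu v hv
      exact hr u (by simpa using hu) v (by simpa using hv)
    · rw [Finset.card_univ, Fintype.card_fin]
      have h1 : #({u | col u = i} : Finset (Fin h)) ≤ h := by
        simpa using Finset.card_le_univ ({u | col u = i} : Finset (Fin h))
      rcases Nat.eq_zero_or_pos h with h0 | h0
      · have : #({u | col u = i} : Finset (Fin h)) = 0 := by omega
        rw [this]; simp
      · have h2 : 2 ^ #({u | col u = i} : Finset (Fin h)) ≤ 2 ^ (h - 1 + 1) :=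
          Nat.pow_le_pow_right (by norm_num) (by omega)
        rw [pow_succ] at h2
        omega
  choose f hf hfE using hstep
  have hE : ∀ i u v (hu : col u = i) (hv : col v = i), EH u v →
      ET (x (i, f i ⟨u, by simpa using hu⟩)) (x (i, f i ⟨v, by simpa using hv⟩)) :=
    fun i u v hu hv huv => hfE i _ _ huv
  have hI : ∀ i u v (hu : col u = i) (hv : col v = i),
      (f i ⟨u, by simpa using hu⟩ : Fin (2 ^ (h - 1))) = f i ⟨v, by simpa using hv⟩ → u = v := by
    intro i u v hu hv huv
    simpa using hf i (Subtype.ext huv)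
  have hdep : ∀ u i (hu : col u = i), (f (col u) ⟨u, by simp⟩ : Fin (2 ^ (h - 1))) =
      f i ⟨u, by simpa using hu⟩ := by
    intro u i hu
    subst hu
    rfl
  refine ⟨fun u => f (col u) ⟨u, by simp⟩, ?_, ?_⟩
  · intro u v huv
    have := hx huv
    simp only [Prod.mk.injEq] at this
    obtain ⟨h1, h2⟩ := this
    rw [hdep u (col v) h1] at h2
    exact hI (col v) u v h1 rfl h2
  · intro u v huv
    by_cases hc : col u = col v
    · have h1 := hE (col v) u v hc rfl huv
      have h2 : x (col u, (f (col u) ⟨u, by simp⟩ : Fin (2 ^ (h - 1)))) =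
          x (col v, (f (col v) ⟨u, by simpa using hc⟩ : Fin (2 ^ (h - 1)))) :=
        congrArg x (Prod.ext hc (hdep u (col v) hc))
      rw [← h2] at h1
      exact h1
    · exact hcross u v hc huv _ _

set_option maxHeartbeats 1000000 in
/-- The counting statement for an arbitrary index set of at most `h` classes, with the explicit
values of the constants. -/
lemma counting_aux {h : ℕ} (hh : 1 ≤ h) {ι V : Type*} [Fintype ι] [DecidableEq ι] [Fintype V]
    (hι : Fintype.card ι ≤ h) (EH : Fin h → Fin h → Prop)
    (col : Fin h → ι) (hac : ∀ i, AcyclicOn EH {v | col v = i})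
    (hdir : ∀ i j : ι, i ≠ j →
            (∀ u v, col u = i → col v = j → ¬ EH v u) ∨
            (∀ u v, col u = i → col v = j → ¬ EH u v))
    (ET : V → V → Prop) (hT : IsTournament ET) (W : ι → Finset V)
    (hdisj : ∀ i j, i ≠ j → Disjoint (W i) (W j))
    (hW : ∀ i, 2 ^ (h - 1) ≤ #(W i)) (m : ℕ) (hm : m = 2 ^ (h - 1))
    (hdens : ∀ i j : ι, i ≠ j →
                (∀ u v, col u = i → col v = j → ¬ EH v u) →
                1 - 1 / (8 * (h : ℝ) ^ 2 * m ^ 4) ≤ eDens ET (W i) (W j)) :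
    1 / (2 * (m : ℝ) ^ h * (2 * m) ^ h) * ∏ u, (#(W (col u)) : ℝ) ≤ (copyCount EH ET : ℝ) := by
  classical
  have hm0 : 0 < m := by rw [hm]; positivity
  have hmR : (0 : ℝ) < m := by exact_mod_cast hm0
  have hhR : (0 : ℝ) < h := by exact_mod_cast hh
  have hWpos : ∀ i, 0 < #(W i) := fun i => lt_of_lt_of_le (by positivity) (hW i)
  choose A hAW hAdisj hAcard using fun i => exists_pieces m hm0 (W i) (by rw [hm]; exact hW i)
  have hApos : ∀ i k, 0 < #(A i k) := by
    intro i k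
    by_contra h0
    have h1 := hAcard i k
    have h2 := hWpos i
    have h3 : #(A i k) = 0 := by omega
    rw [h3] at h1
    omega
  set B : ι × Fin m → Finset V := fun p => A p.1 p.2 with hB
  set Ω := Fintype.piFinset B with hΩ
  have hΩcard : #Ω = ∏ p, #(B p) := Fintype.card_piFinset B
  have hΩpos : (0 : ℝ) < #Ω := by
    rw [hΩcard]
    exact_mod_cast Finset.prod_pos fun (p : ι × Fin m) _ => hApos p.1 p.2
  set C : Finset (Fin h → V) := {f | Function.Injective f ∧ ∀ u v, EH u v → ET (f u) (f v)} with hC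
  have hCcard : copyCount EH ET = #C := by
    rw [copyCount, ← Set.ncard_coe_finset]
    congr 1
    ext f
    simp [hC]
  -- `R i j` says that all edges between the two classes must go from `i` to `j`.
  set R : ι → ι → Prop := fun i j => i ≠ j ∧ ∀ u v, col u = i → col v = j → ¬ EH v u with hR
  set Bad : (ι × Fin m) × (ι × Fin m) → Finset (ι × Fin m → V) := fun pq =>
    {x ∈ Ω | R pq.1.1 pq.2.1 ∧ ¬ ET (x pq.1) (x pq.2)} with hBad
  have hBadcard : ∀ pq, (#(Bad pq) : ℝ) ≤ 1 / (2 * (h : ℝ) ^ 2 * m ^ 2) * #Ω := by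
    rintro ⟨p, q⟩
    by_cases hpq : R p.1 q.1
    swap
    · have : Bad (p, q) = ∅ := by
        simp [hBad, hpq]
      rw [this]
      simp only [Finset.card_empty, Nat.cast_zero]
      positivity
    have hne : p ≠ q := fun hh' => hpq.1 (by rw [hh'])
    set D : Finset (Fin 2 → V) := {y | y 0 ∈ B p ∧ y 1 ∈ B q ∧ ¬ ET (y 0) (y 1)} with hD
    have hs : Function.Injective ![p, q] := by
      intro a b hab
      fin_cases a <;> fin_cases b <;> simp_all
    have h1 := card_comp_mem_mul_le B ![p, q] hs D
    rw [← hΩcard, ← hΩ] at h1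
    simp only [Fin.prod_univ_two, Matrix.cons_val_zero, Matrix.cons_val_one] at h1
    have h2 : #(Bad (p, q)) ≤ #{x ∈ Ω | x ∘ ![p, q] ∈ D} := by
      apply Finset.card_le_card
      intro x hx
      simp only [hBad, Finset.mem_filter] at hx
      rw [Finset.mem_filter]
      refine ⟨hx.1, ?_⟩
      have hxΩ := Fintype.mem_piFinset.mp hx.1
      simp only [hD, Finset.mem_filter, Finset.mem_univ, true_and, Function.comp,
        Matrix.cons_val_zero, Matrix.cons_val_one]
      exact ⟨hxΩ p, hxΩ q, hx.2.2⟩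
    have h3 : #D ≤ #{z ∈ W p.1 ×ˢ W q.1 | ¬ ET z.1 z.2} := by
      refine Finset.card_le_card_of_injOn (fun y => (y 0, y 1)) ?_ ?_
      · intro y hy
        simp only [hD, Finset.coe_filter, Finset.mem_univ, true_and, Set.mem_ofPred_eq] at hy
        simp only [Finset.coe_filter, Finset.mem_product, Set.mem_ofPred_eq]
        exact ⟨⟨hAW _ _ hy.1, hAW _ _ hy.2.1⟩, hy.2.2⟩
      · intro y _ y' _ hyy
        simp only [Prod.mk.injEq] at hyy
        ext a
        fin_cases a
        · exact hyy.1
        · exact hyy.2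
    have h4 := nonedges_le ET (W p.1) (W q.1) (hWpos _) (hWpos _) _ (hdens _ _ hpq.1 hpq.2)
    have h5 : (#(W p.1) : ℝ) * #(W q.1) ≤ (2 * m * #(B p)) * (2 * m * #(B q)) := by
      exact_mod_cast Nat.mul_le_mul (hAcard p.1 p.2) (hAcard q.1 q.2)
    have h6 : (#(Bad (p, q)) : ℝ) * (#(B p) * #(B q)) ≤ #D * #Ω := by
      have := (Nat.mul_le_mul_right (#(B p) * #(B q)) h2).trans h1
      exact_mod_cast this
    have hp0 : (0 : ℝ) < #(B p) := by exact_mod_cast hApos p.1 p.2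
    have hq0 : (0 : ℝ) < #(B q) := by exact_mod_cast hApos q.1 q.2
    have h7 : (#D : ℝ) ≤ 1 / (2 * (h : ℝ) ^ 2 * m ^ 2) * (#(B p) * #(B q)) := by
      calc (#D : ℝ) ≤ #{z ∈ W p.1 ×ˢ W q.1 | ¬ ET z.1 z.2} := by exact_mod_cast h3
        _ ≤ 1 / (8 * (h : ℝ) ^ 2 * m ^ 4) * (#(W p.1) * #(W q.1)) := h4
        _ ≤ 1 / (8 * (h : ℝ) ^ 2 * m ^ 4) * ((2 * m * #(B p)) * (2 * m * #(B q))) := by gcongr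
        _ = _ := by field_simp; ring
    have h8 : (#(Bad (p, q)) : ℝ) * (#(B p) * #(B q)) ≤
        (1 / (2 * (h : ℝ) ^ 2 * m ^ 2) * #Ω) * (#(B p) * #(B q)) := by
      calc _ ≤ (#D : ℝ) * #Ω := h6
        _ ≤ (1 / (2 * (h : ℝ) ^ 2 * m ^ 2) * (#(B p) * #(B q))) * #Ω := by gcongr
        _ = _ := by ring
    exact le_of_mul_le_mul_right h8 (by positivity)
  have hBadsum : ((∑ pq, #(Bad pq) : ℕ) : ℝ) ≤ #Ω / 2 := by
    push_cast
    calc ∑ pq, (#(Bad pq) : ℝ) ≤ ∑ _pq : (ι × Fin m) × (ι × Fin m),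
          1 / (2 * (h : ℝ) ^ 2 * m ^ 2) * #Ω := Finset.sum_le_sum fun pq _ => hBadcard pq
      _ = ((Fintype.card ι : ℝ) * m) ^ 2 * (1 / (2 * (h : ℝ) ^ 2 * m ^ 2) * #Ω) := by
          rw [Finset.sum_const, Finset.card_univ, nsmul_eq_mul]
          simp only [Fintype.card_prod, Fintype.card_fin]
          push_cast
          ring
      _ ≤ ((h : ℝ) * m) ^ 2 * (1 / (2 * (h : ℝ) ^ 2 * m ^ 2) * #Ω) := by
          have : (Fintype.card ι : ℝ) ≤ h := by exact_mod_cast hι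
          gcongr
      _ = #Ω / 2 := by field_simp
  set G : (Fin h → Fin m) → Finset (ι × Fin m → V) := fun s =>
    {x ∈ Ω | x ∘ (fun u => (col u, s u)) ∈ C} with hG
  -- Every choice of points is bad for some pair of slots or yields a copy.
  have hcover : Ω ⊆ (Finset.univ.biUnion Bad) ∪ (Finset.univ.biUnion G) := by
    intro x hx
    rw [Finset.mem_union]
    by_cases hb : x ∈ Finset.univ.biUnion Bad
    · exact Or.inl hb
    right
    have hgood : ∀ p q : ι × Fin m, R p.1 q.1 → ET (x p) (x q) := by
      intro p q hpq
      by_contra hET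
      exact hb (Finset.mem_biUnion.mpr ⟨(p, q), Finset.mem_univ _,
        Finset.mem_filter.mpr ⟨hx, hpq, hET⟩⟩)
    have hxΩ := Fintype.mem_piFinset.mp hx
    have hxinj : Function.Injective x := by
      rintro ⟨i, k⟩ ⟨j, l⟩ hxx
      have hi : x (i, k) ∈ A i k := hxΩ (i, k)
      have hj : x (i, k) ∈ A j l := hxx ▸ hxΩ (j, l)
      have hij : i = j := by
        by_contra hij
        exact Finset.disjoint_left.mp (hdisj i j hij) (hAW _ _ hi) (hAW _ _ hj)
      subst hij
      have hkl : k = l := by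
        by_contra hkl
        exact Finset.disjoint_left.mp (hAdisj i k l hkl) hi hj
      rw [hkl]
    subst hm
    obtain ⟨s, hs1, hs2⟩ := exists_slots EH col hac ET hT x hxinj (by
      intro u v huv hE k l
      refine hgood _ _ ⟨huv, ?_⟩
      rcases hdir _ _ huv with h1 | h1
      · exact h1
      · exact absurd hE (h1 u v rfl rfl))
    refine Finset.mem_biUnion.mpr ⟨s, Finset.mem_univ _, Finset.mem_filter.mpr ⟨hx, ?_⟩⟩
    exact Finset.mem_filter.mpr ⟨Finset.mem_univ _, hs1, hs2⟩
  set P : ℝ := ∏ u, (#(W (col u)) : ℝ) with hP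
  have hPpos : 0 < P := Finset.prod_pos fun u _ => by exact_mod_cast hWpos _
  have hGcard : ∀ s, (#(G s) : ℝ) ≤ (2 * m) ^ h * #C * #Ω / P := by
    intro s
    rw [le_div_iff₀ hPpos]
    by_cases hs : Function.Injective fun u => (col u, s u)
    · have h1 := card_comp_mem_mul_le B (fun u => (col u, s u)) hs C
      rw [← hΩcard, ← hΩ] at h1
      have h1' : (#(G s) : ℝ) * ∏ u, (#(A (col u) (s u)) : ℝ) ≤ #C * #Ω := by
        exact_mod_cast h1
      have h2 : P ≤ (2 * m) ^ h * ∏ u, (#(A (col u) (s u)) : ℝ) := by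
        calc P ≤ ∏ u, (2 * m * #(A (col u) (s u)) : ℝ) := by
              apply Finset.prod_le_prod
              · intros; positivity
              · intro u _
                exact_mod_cast hAcard (col u) (s u)
          _ = _ := by
              rw [Finset.prod_mul_distrib, Finset.prod_const, Finset.card_univ, Fintype.card_fin]
      calc (#(G s) : ℝ) * P ≤ #(G s) * ((2 * m) ^ h * ∏ u, (#(A (col u) (s u)) : ℝ)) := by gcongr
        _ = (2 * m) ^ h * (#(G s) * ∏ u, (#(A (col u) (s u)) : ℝ)) := by ring
        _ ≤ (2 * m) ^ h * (#C * #Ω) := by gcongr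
        _ = _ := by ring
    · have : G s = ∅ := by
        rw [Finset.eq_empty_iff_forall_notMem]
        intro x hx
        have hx2 := (Finset.mem_filter.mp (Finset.mem_filter.mp hx).2).2.1
        exact hs hx2.of_comp
      rw [this]
      simp only [Finset.card_empty, Nat.cast_zero, zero_mul]
      positivity
  have hGsum : ((∑ s, #(G s) : ℕ) : ℝ) ≤ m ^ h * ((2 * m) ^ h * #C * #Ω / P) := by
    push_cast
    calc ∑ s, (#(G s) : ℝ) ≤ ∑ _s : Fin h → Fin m, ((2 * m) ^ h * #C * #Ω / P : ℝ) :=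
          Finset.sum_le_sum fun s _ => hGcard s
      _ = _ := by
          rw [Finset.sum_const, Finset.card_univ, nsmul_eq_mul]
          simp
  have htotal : (#Ω : ℝ) ≤ (∑ pq, #(Bad pq) : ℕ) + (∑ s, #(G s) : ℕ) := by
    have := (Finset.card_le_card hcover).trans (Finset.card_union_le _ _)
    exact_mod_cast this.trans (Nat.add_le_add Finset.card_biUnion_le Finset.card_biUnion_le)
  have hhalf : (#Ω : ℝ) / 2 ≤ m ^ h * ((2 * m) ^ h * #C * #Ω / P) := by linarith
  have hfin : (#Ω : ℝ) * (1 / 2 * P) ≤ #Ω * (m ^ h * (2 * m) ^ h * #C) := by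
    have := mul_le_mul_of_nonneg_right hhalf hPpos.le
    calc (#Ω : ℝ) * (1 / 2 * P) = #Ω / 2 * P := by ring
      _ ≤ _ := this
      _ = _ := by field_simp
  have hfin' := le_of_mul_le_mul_left hfin hΩpos
  rw [hCcard, div_mul_eq_mul_div, div_le_iff₀ (by positivity)]
  linarith

/-- the counting lemma. -/
theorem stmt6 (h : ℕ) (hh : 1 ≤ h) :
    ∃ η α : ℝ, 0 < η ∧ 0 < α ∧
      ∀ EH : Fin h → Fin h → Prop, IsOrientedGraph EH →
        ∀ (ℓ : ℕ) (col : Fin h → Fin ℓ),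
          (∀ i : Fin ℓ, AcyclicOn EH {v | col v = i}) →
          (∀ i j : Fin ℓ, i ≠ j →
            (∀ u v, col u = i → col v = j → ¬ EH v u) ∨
            (∀ u v, col u = i → col v = j → ¬ EH u v)) →
          ∀ (V : Type) (_ : Fintype V) (ET : V → V → Prop), IsTournament ET →
            ∀ W : Fin ℓ → Finset V,
              (∀ i j, i ≠ j → Disjoint (W i) (W j)) →
              (∀ i, 2 ^ (h - 1) ≤ (W i).card) →
              (∀ i j : Fin ℓ, i ≠ j →
                (∀ u v, col u = i → col v = j → ¬ EH v u) →
                1 - η ≤ eDens ET (W i) (W j)) →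
              α * ∏ i : Fin ℓ,
                  ((W i).card : ℝ) ^ (Finset.univ.filter fun v => col v = i).card ≤
                (copyCount EH ET : ℝ) := by
  classical
  have hhR : (0 : ℝ) < h := by exact_mod_cast hh
  set m : ℕ := 2 ^ (h - 1) with hm
  have hmR : (0 : ℝ) < m := by rw [hm]; positivity
  refine ⟨1 / (8 * (h : ℝ) ^ 2 * m ^ 4), 1 / (2 * (m : ℝ) ^ h * (2 * m) ^ h), by positivity,
    by positivity, ?_⟩
  intro EH _ ℓ col hac hdir V _ ET hT W hdisj hW hdens
  -- The number of classes may exceed `h`, but at most `h` of them are nonempty.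
  have hcol : ∀ u, col u ∈ Finset.univ.image col := fun u =>
    Finset.mem_image_of_mem _ (Finset.mem_univ _)
  have hιcard : Fintype.card (Finset.univ.image col) ≤ h := by
    rw [Fintype.card_coe]
    simpa using Finset.card_image_le (s := (Finset.univ : Finset (Fin h))) (f := col)
  have hprod : ∏ i : Fin ℓ, ((W i).card : ℝ) ^ (Finset.univ.filter fun v => col v = i).card =
      ∏ u, ((W (col u)).card : ℝ) := by
    rw [← Finset.prod_fiberwise' Finset.univ col fun i => ((W i).card : ℝ)]
    exact Finset.prod_congr rfl fun i _ => (Finset.prod_const _).symm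
  rw [hprod]
  refine counting_aux (ι := (Finset.univ.image col)) hh hιcard EH (fun u => ⟨col u, hcol u⟩) ?_ ?_ ET hT (fun i => W i)
    ?_ (fun i => hW i) m hm ?_
  · rintro ⟨i, hi⟩
    simpa only [Subtype.mk.injEq] using hac i
  · rintro ⟨i, hi⟩ ⟨j, hj⟩ hij
    simpa only [Subtype.mk.injEq] using hdir i j (by simpa using hij)
  · rintro ⟨i, hi⟩ ⟨j, hj⟩ hij
    exact hdisj i j (by simpa using hij)
  · rintro ⟨i, hi⟩ ⟨j, hj⟩ hij hE
    exact hdens i j (by simpa using hij) (by simpa only [Subtype.mk.injEq] using hE)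
end

section
/- For every k ≥ 3 there are δ₀ = δ₀(k) > 0 and c = c(k) > 0 such that for every δ < δ₀, every 3 ≤ ℓ ≤ k, and every sequence of distinct indices i₁, i₂, …, i_ℓ ∈ {1,…,k}, there is an undirected graph R with the following properties: (1) V(R) = X₁ ⊎ … ⊎ X_k and each X_i is an independent set; (2) |V(R)| ≥ (1/δ)^{c·log(1/δ)}; (3) E(R) is the union of at least δ|V(R)|² pairwise edge-disjoint k-cliques, each of the form {x₁,…,x_k} with x_i ∈ X_i for every i; (4) R contains at most |V(R)|² cycles of the form x_{i₁} x_{i₂} … x_{i_ℓ} x_{i₁} with x_{i_j} ∈ X_{i_j} for j = 1,…,ℓ. -/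
/-!
The graph is a Ruzsa–Szemerédi construction over a Behrend-type set. Put a copy
of `{0, …, kM - 1}` in each part and, for `x < M` and `s ∈ S ⊆ {0, …, M - 1}`, take the clique whose
vertex in part `i` is `x + a i * s`, where `a` is a permutation of `{0, …, k - 1}`. Two vertices of a
clique determine `x` and `s`, so the cliques are edge-disjoint (`label_inj`).

The permutation is chosen so that `a i_j = j` along the prescribed cyclic order. Then the labels
`u_j` of a cycle satisfy `u_{j+1} = u_j + s_j` for `j < ℓ - 1`, and closing the cycle reads
`s_0 + ⋯ + s_{ℓ-2} = (ℓ - 1) s_{ℓ-1}`. All coefficients on the left are positive, so this is a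
convex equation, and Behrend's sphere construction gives a dense set `S` in which it has only
constant solutions (`exists_meanFree`): by strict convexity no point of a sphere is the
average of other points of the sphere (`sphere_mean`), and base-`D` expansion without carries moves
this from vectors to integers. Hence every cycle is determined by its first two vertices
(`labels_eq`), which leaves at most `N ^ 2` cycles.

With `B = 2 ^ k`, dimension `n` and digits below `B ^ n`, one gets `M = B ^ (n (n + 1))` and
`M ≤ B ^ (4 n) |S|`. Taking `n` with `B ^ (4 (n + 1)) ≤ 1 / δ < B ^ (4 (n + 2))` gives the density
`δ`, while `N ≥ M` is quasi-polynomial in `1 / δ`.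
-/

/-- The cyclic successor on `Fin ℓ`. -/
def cycSucc {ℓ : ℕ} (j : Fin ℓ) : Fin ℓ :=
  ⟨(j.1 + 1) % ℓ, Nat.mod_lt _ j.pos⟩

/-! ### Behrend-type sets -/

/-- A set of naturals is `k`-mean-free if no element is the average of fewer
than `k` elements, except trivially. -/
def MeanFree (k : ℕ) (S : Finset ℕ) : Prop :=
  ∀ p, p < k → ∀ (s : ℕ → ℕ) (t : ℕ), (∀ j < p, s j ∈ S) → t ∈ S →
    ∑ j ∈ Finset.range p, s j = p * t → ∀ j < p, s j = t

lemma behrend_map_lt (D : ℕ) : ∀ {n : ℕ} (v : Fin n → ℕ), (∀ i, v i < D) →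
    Behrend.map D v < D ^ n := by
  intro n
  induction n with
  | zero => intro v _; simp
  | succ n ih =>
    intro v hv
    have h1 := ih (v ∘ Fin.succ) (fun i => hv _)
    have h0 := hv 0
    rw [Behrend.map_succ', pow_succ]
    nlinarith

/-- Strict convexity of the sphere: if the sum of `p` points of a sphere is `p` times a point `w`
of the same sphere, then `∑ ‖v j - w‖² = p r - 2 p r + p r = 0`. -/
lemma sphere_mean {n r p : ℕ} (v : ℕ → Fin n → ℕ) (w : Fin n → ℕ)
    (hv : ∀ j < p, ∑ i, v j i ^ 2 = r) (hw : ∑ i, w i ^ 2 = r)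
    (h : ∑ j ∈ Finset.range p, v j = p • w) : ∀ j < p, v j = w := by
  have key : ∑ j ∈ Finset.range p, ∑ i, ((v j i : ℤ) - w i) ^ 2 = 0 := by
    have hw' : ∑ i, (w i : ℤ) ^ 2 = r := by exact_mod_cast hw
    have e1 : ∑ j ∈ Finset.range p, ∑ i, (v j i : ℤ) ^ 2 = p * r := by
      rw [Finset.sum_congr rfl (g := fun _ => (r : ℤ))]
      · simp
      · intro j hj
        exact_mod_cast hv j (Finset.mem_range.1 hj)
    have e2 : ∑ j ∈ Finset.range p, ∑ i, (v j i : ℤ) * w i = p * r := by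
      rw [Finset.sum_comm]
      simp_rw [← Finset.sum_mul]
      rw [← hw', Finset.mul_sum]
      refine Finset.sum_congr rfl fun i _ => ?_
      have := congrFun h i
      simp only [Finset.sum_apply, Pi.smul_apply, smul_eq_mul] at this
      have h' : ∑ j ∈ Finset.range p, (v j i : ℤ) = p * w i := by exact_mod_cast this
      rw [h']; ring
    have e3 : ∑ j ∈ Finset.range p, ∑ i, (w i : ℤ) ^ 2 = p * r := by simp [hw']
    have : ∀ j i, ((v j i : ℤ) - w i) ^ 2 = (v j i : ℤ) ^ 2 - 2 * (v j i * w i) + (w i : ℤ) ^ 2 :=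
      fun j i => by ring
    simp only [this, Finset.sum_add_distrib, Finset.sum_sub_distrib, ← Finset.mul_sum, e1, e2]
    simp only [hw', Finset.sum_const, Finset.card_range, nsmul_eq_mul]
    ring
  intro j hj
  rw [Finset.sum_eq_zero_iff_of_nonneg
    (fun j _ => Finset.sum_nonneg fun i _ => sq_nonneg _)] at key
  have h2 := key j (Finset.mem_range.2 hj)
  rw [Finset.sum_eq_zero_iff_of_nonneg (fun i _ => sq_nonneg _)] at h2
  funext i
  have h3 := pow_eq_zero_iff (two_ne_zero) |>.1 (h2 i (Finset.mem_univ _))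
  omega

/-- The Behrend-type set: with `B ≥ k`, digits below `B ^ n` and base `B ^ (n + 1)`, so that adding
fewer than `k` elements produces no carries. -/
lemma exists_meanFree (k B n : ℕ) (hB : 2 ≤ B) (hk : k ≤ B) (hn : 1 ≤ n) :
    ∃ S : Finset ℕ, MeanFree k S ∧ (∀ s ∈ S, s < B ^ (n * (n + 1))) ∧
      B ^ (n * (n + 1)) ≤ B ^ (4 * n) * S.card := by
  obtain ⟨r, hr⟩ := Behrend.exists_large_sphere n (B ^ n)
  have hdpos : 0 < B ^ n := by positivity
  have hlt : ∀ v ∈ Behrend.sphere n (B ^ n) r, ∀ i, v i < B ^ n := fun v hv =>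
    Behrend.mem_box.1 (Behrend.sphere_subset_box hv)
  have hdD : B ^ n ≤ B ^ (n + 1) := Nat.pow_le_pow_right (by omega) (by omega)
  have hinj : Set.InjOn (Behrend.map (n := n) (B ^ (n + 1))) (Behrend.sphere n (B ^ n) r) :=
    Behrend.map_injOn.mono fun v hv i => (hlt v hv i).trans_le hdD
  refine ⟨(Behrend.sphere n (B ^ n) r).image (Behrend.map (B ^ (n + 1))), ?_, ?_, ?_⟩
  · intro p hp s t hs ht hsum
    obtain ⟨w, hw, rfl⟩ := Finset.mem_image.1 ht
    have : ∀ j, ∃ v, j < p → v ∈ Behrend.sphere n (B ^ n) r ∧ Behrend.map (B ^ (n + 1)) v = s j := by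
      intro j
      by_cases hj : j < p
      · obtain ⟨v, hv, h⟩ := Finset.mem_image.1 (hs j hj)
        exact ⟨v, fun _ => ⟨hv, h⟩⟩
      · exact ⟨0, fun h => absurd h hj⟩
    choose v hv using this
    have hmap : Behrend.map (B ^ (n + 1)) (∑ j ∈ Finset.range p, v j) =
        Behrend.map (B ^ (n + 1)) (p • w) := by
      rw [map_sum, map_nsmul, smul_eq_mul, ← hsum]
      exact Finset.sum_congr rfl fun j hj => (hv j (Finset.mem_range.1 hj)).2
    have hsmall : ∀ x, x ≤ p * (B ^ n - 1) → x < B ^ (n + 1) := by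
      intro x hx
      have h1 : p * (B ^ n - 1) ≤ p * B ^ n := Nat.mul_le_mul_left _ (by omega)
      have h2 : p * B ^ n < B * B ^ n := Nat.mul_lt_mul_of_pos_right (by omega) hdpos
      rw [pow_succ']
      omega
    have hvec : ∑ j ∈ Finset.range p, v j = p • w := by
      refine Behrend.map_injOn ?_ ?_ hmap
      · intro i
        refine hsmall _ ?_
        rw [Finset.sum_apply]
        refine (Finset.sum_le_card_nsmul _ _ (B ^ n - 1) fun j hj => ?_).trans (by simp)
        have := hlt _ (hv j (Finset.mem_range.1 hj)).1 i
        omega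
      · intro i
        refine hsmall _ ?_
        have := hlt _ hw i
        exact Nat.mul_le_mul_left _ (by omega)
    intro j hj
    have := sphere_mean v w (fun j hj => (Finset.mem_filter.1 (hv j hj).1).2)
      (Finset.mem_filter.1 hw).2 hvec j hj
    rw [← (hv j hj).2, this]
  · intro s hs
    obtain ⟨v, hv, rfl⟩ := Finset.mem_image.1 hs
    have := behrend_map_lt (B ^ (n + 1)) v fun i => (hlt v hv i).trans_le hdD
    rwa [← pow_mul, mul_comm (n + 1)] at this
  · rw [Finset.card_image_of_injOn hinj]
    have hpos : (0 : ℝ) < ((n * (B ^ n) ^ 2 : ℕ) : ℝ) := by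
      exact_mod_cast Nat.mul_pos hn (by positivity)
    rw [div_le_iff₀ hpos] at hr
    have hr' : (B ^ n) ^ n ≤ (Behrend.sphere n (B ^ n) r).card * (n * (B ^ n) ^ 2) := by
      exact_mod_cast hr
    have hnB : n ≤ B ^ n := (Nat.lt_pow_self (by omega)).le
    generalize (Behrend.sphere n (B ^ n) r).card = c at *
    calc B ^ (n * (n + 1)) = (B ^ n) ^ n * B ^ n := by rw [← pow_mul, ← pow_add]; ring_nf
      _ ≤ (c * (n * (B ^ n) ^ 2)) * B ^ n := Nat.mul_le_mul_right _ hr'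
      _ ≤ (c * (B ^ n * (B ^ n) ^ 2)) * B ^ n := by gcongr
      _ = B ^ (4 * n) * c := by rw [mul_comm 4 n, pow_mul]; ring

/-! ### Labels of a cycle -/

/-- The labels of a cycle form an arithmetic progression, so they are determined by the first
two. -/
lemma labels_eq {k p : ℕ} (hp : p < k) {S : Finset ℕ} (hS : MeanFree k S) (u : ℕ → ℕ)
    (hstep : ∀ j < p, ∃ s ∈ S, u (j + 1) = u j + s)
    (hlast : ∃ t ∈ S, u p = u 0 + p * t) :
    ∃ t, ∀ j ≤ p, u j = u 0 + j * t := by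
  obtain ⟨t, ht, hlast⟩ := hlast
  have : ∀ j, ∃ s, j < p → s ∈ S ∧ u (j + 1) = u j + s := by
    intro j
    by_cases hj : j < p
    · obtain ⟨s, hs⟩ := hstep j hj
      exact ⟨s, fun _ => hs⟩
    · exact ⟨0, fun h => absurd h hj⟩
  choose s hs using this
  have hsum : ∀ j ≤ p, u j = u 0 + ∑ i ∈ Finset.range j, s i := by
    intro j
    induction j with
    | zero => simp
    | succ j ih =>
      intro hj
      rw [Finset.sum_range_succ, (hs j hj).2, ih (by omega), add_assoc]
  have heq := hS p hp s t (fun j hj => (hs j hj).1) ht (by have := hsum p le_rfl; omega)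
  refine ⟨t, fun j hj => ?_⟩
  rw [hsum j hj, Finset.sum_congr rfl fun i hi =>
    heq i ((Finset.mem_range.1 hi).trans_le hj)]
  simp

/-- Extends `idx j ↦ j` to a permutation of `Fin k`: the order in which the cycle visits the parts
becomes the order of the slopes. -/
lemma exists_perm {k ℓ : ℕ} (idx : Fin ℓ → Fin k) (hidx : Function.Injective idx) :
    ∃ a : Equiv.Perm (Fin k), ∀ j, (a (idx j) : ℕ) = j := by
  have hle : ℓ ≤ k := by simpa using Fintype.card_le_of_injective idx hidx
  let e : Fin ℓ ↪ Fin k := ⟨idx, hidx⟩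
  obtain ⟨g, hg⟩ := Set.MapsTo.exists_equiv_extend_of_card_eq (α := Fin k)
    (t := (Finset.univ : Finset (Fin k))) (by simp) (s := {x | (x : ℕ) < ℓ})
    (f := fun x => if h : (x : ℕ) < ℓ then idx ⟨x, h⟩ else x) (by intro x _; simp)
    (by
      intro x hx y hy hxy
      have hx' : (x : ℕ) < ℓ := hx
      have hy' : (y : ℕ) < ℓ := hy
      simp only [hx', hy', dif_pos] at hxy
      have := hidx hxy
      simp only [Fin.mk.injEq] at this
      exact Fin.ext this)
  let b : Fin k ≃ Fin k := g.trans ⟨fun x => x.1, fun x => ⟨x, Finset.mem_univ _⟩,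
    fun _ => rfl, fun _ => rfl⟩
  refine ⟨b.symm, fun j => ?_⟩
  have : b (Fin.castLE hle j) = idx j := by
    change (g (Fin.castLE hle j) : Fin k) = idx j
    rw [hg _ (by simp)]
    simp
  rw [← this, Equiv.symm_apply_apply]
  simp

lemma label_inj {a b x s y t : ℕ} (hab : a ≠ b) (h1 : x + a * s = y + a * t)
    (h2 : x + b * s = y + b * t) : x = y ∧ s = t := by
  have hst : s = t := by
    have h : ((a : ℤ) - b) * ((s : ℤ) - t) = 0 := by
      have h1' : (x : ℤ) + a * s = y + a * t := by exact_mod_cast h1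
      have h2' : (x : ℤ) + b * s = y + b * t := by exact_mod_cast h2
      linear_combination h1' - h2'
    rcases mul_eq_zero.1 h with h | h <;> omega
  subst hst
  exact ⟨by omega, rfl⟩

/-! ### The graph and its cycles -/

/-- The vertex of the clique with parameters `(x, s)` in part `i`: label `x + a i * s`. A vertex is
a pair (part, label), encoded in `Fin (k * (k * M))`. -/
def cliqueVertex {k M : ℕ} (a : Equiv.Perm (Fin k)) (q : Fin M × Fin M) (i : Fin k) :
    Fin (k * (k * M)) :=
  finProdFinEquiv (i, ⟨q.1 + a i * q.2, by
    have h1 := q.1.2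
    have h2 := q.2.2
    have h3 : (a i : ℕ) + 1 ≤ k := (a i).2
    calc (q.1 : ℕ) + a i * q.2 < M + a i * M :=
          add_lt_add_of_lt_of_le h1 (Nat.mul_le_mul_left _ h2.le)
      _ = (a i + 1) * M := by ring
      _ ≤ k * M := Nat.mul_le_mul_right _ h3⟩)

/-- The part of a vertex. -/
def vPart {k m : ℕ} (v : Fin (k * m)) : Fin k := (finProdFinEquiv.symm v).1

/-- The label of a vertex inside its part. -/
def vLabel {k m : ℕ} (v : Fin (k * m)) : ℕ := (finProdFinEquiv.symm v).2

lemma vertex_ext {k m : ℕ} {v w : Fin (k * m)} (h1 : vPart v = vPart w)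
    (h2 : vLabel v = vLabel w) : v = w :=
  finProdFinEquiv.symm.injective (Prod.ext h1 (Fin.ext h2))

@[simp] lemma vPart_cliqueVertex {k M : ℕ} (a : Equiv.Perm (Fin k)) (q : Fin M × Fin M)
    (i : Fin k) : vPart (cliqueVertex a q i) = i := by
  simp [vPart, cliqueVertex]

@[simp] lemma vLabel_cliqueVertex {k M : ℕ} (a : Equiv.Perm (Fin k)) (q : Fin M × Fin M)
    (i : Fin k) : vLabel (cliqueVertex a q i) = q.1 + a i * q.2 := by
  simp [vLabel, cliqueVertex]

lemma cliqueVertex_inj {k M : ℕ} (a : Equiv.Perm (Fin k)) {q q' : Fin M × Fin M}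
    {i j i' j' : Fin k} (hij : i ≠ j) (h1 : cliqueVertex a q i = cliqueVertex a q' i')
    (h2 : cliqueVertex a q j = cliqueVertex a q' j') : q = q' := by
  obtain rfl : i = i' := by simpa using congrArg vPart h1
  obtain rfl : j = j' := by simpa using congrArg vPart h2
  have h1 := congrArg vLabel h1
  have h2 := congrArg vLabel h2
  simp only [vLabel_cliqueVertex] at h1 h2
  have hne : (a i : ℕ) ≠ a j := fun h => hij (a.injective (Fin.ext h))
  obtain ⟨hx, hs⟩ := label_inj hne h1 h2
  exact Prod.ext (Fin.ext hx) (Fin.ext hs)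

/-- The union of the cliques with parameters in `Fin M × T`. -/
def rsGraph {k M : ℕ} (a : Equiv.Perm (Fin k)) (T : Finset (Fin M)) :
    SimpleGraph (Fin (k * (k * M))) where
  Adj v w := ∃ q : Fin M × Fin M, q.2 ∈ T ∧ ∃ i j, i ≠ j ∧
    cliqueVertex a q i = v ∧ cliqueVertex a q j = w
  symm := ⟨by
    rintro v w ⟨q, hq, i, j, hij, h1, h2⟩
    exact ⟨q, hq, j, i, hij.symm, h2, h1⟩⟩
  loopless := ⟨by
    rintro v ⟨q, _, i, j, hij, h1, h2⟩
    apply hij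
    simpa using congrArg vPart (h1.trans h2.symm)⟩

/-- Adjacent vertices in known parts have labels `x + a i * s` and `x + a j * s`. -/
lemma rsGraph_labels {k M : ℕ} {a : Equiv.Perm (Fin k)} {T : Finset (Fin M)}
    {v w : Fin (k * (k * M))} (h : (rsGraph a T).Adj v w) :
    ∃ x : ℕ, ∃ s ∈ T.map Fin.valEmbedding, vLabel v = x + a (vPart v) * s ∧
      vLabel w = x + a (vPart w) * s := by
  obtain ⟨q, hq, i, j, _, rfl, rfl⟩ := h
  exact ⟨q.1, q.2, Finset.mem_map_of_mem Fin.valEmbedding hq, by simp, by simp⟩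

lemma ncard_cycles_le {k M ℓ : ℕ} (hℓ : 3 ≤ ℓ) (hℓk : ℓ ≤ k) (idx : Fin ℓ → Fin k)
    (a : Equiv.Perm (Fin k)) (ha : ∀ j, (a (idx j) : ℕ) = j) (T : Finset (Fin M))
    (hT : MeanFree k (T.map Fin.valEmbedding)) :
    Set.ncard {y : Fin ℓ → Fin (k * (k * M)) | (∀ j, vPart (y j) = idx j) ∧
      ∀ j, (rsGraph a T).Adj (y j) (y (cycSucc j))} ≤ (k * (k * M)) ^ 2 := by
  obtain ⟨p, rfl⟩ : ∃ p, ℓ = p + 1 := ⟨ℓ - 1, by omega⟩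
  have key : ∀ y : Fin (p + 1) → Fin (k * (k * M)), (∀ j, vPart (y j) = idx j) →
      (∀ j, (rsGraph a T).Adj (y j) (y (cycSucc j))) →
      ∃ t, ∀ j, vLabel (y j) = vLabel (y 0) + j * t := by
    intro y hy hadj
    let u : ℕ → ℕ := fun j => if h : j < p + 1 then vLabel (y ⟨j, h⟩) else 0
    have hu : ∀ j (h : j < p + 1), u j = vLabel (y ⟨j, h⟩) := fun j h => dif_pos h
    obtain ⟨t, ht⟩ := labels_eq (p := p) (by omega) hT u (by
      intro j hj
      obtain ⟨x, s, hs, h1, h2⟩ := rsGraph_labels (hadj ⟨j, by omega⟩)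
      have hc : (cycSucc ⟨j, by omega⟩ : Fin (p + 1)) = ⟨j + 1, by omega⟩ := by
        simp only [cycSucc, Fin.mk.injEq]
        exact Nat.mod_eq_of_lt (by omega)
      rw [hc] at h2
      rw [hy, ha] at h1 h2
      refine ⟨s, hs, ?_⟩
      rw [hu j (by omega), hu (j + 1) (by omega), h1, h2]
      ring) (by
      obtain ⟨x, s, hs, h1, h2⟩ := rsGraph_labels (hadj ⟨p, by omega⟩)
      have hc : (cycSucc ⟨p, by omega⟩ : Fin (p + 1)) = ⟨0, by omega⟩ := by
        simp [cycSucc]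
      rw [hc] at h2
      rw [hy, ha] at h1 h2
      refine ⟨s, hs, ?_⟩
      rw [hu p (by omega), hu 0 (by omega), h1, h2]
      ring)
    refine ⟨t, fun j => ?_⟩
    have := ht j (by omega)
    rw [hu j j.2, hu 0 (by omega)] at this
    exact this
  have hcard : (Set.univ : Set (Fin (k * (k * M)) × Fin (k * (k * M)))).ncard
      = (k * (k * M)) ^ 2 := by
    rw [Set.ncard_univ, Nat.card_prod, Nat.card_fin, sq]
  rw [← hcard]
  refine Set.ncard_le_ncard_of_injOn (fun y => (y 0, y ⟨1, by omega⟩))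
    (fun _ _ => Set.mem_univ _) ?_ Set.finite_univ
  rintro y ⟨hy, hya⟩ z ⟨hz, hza⟩ hyz
  obtain ⟨h0, h1⟩ := Prod.mk.inj hyz
  obtain ⟨t, ht⟩ := key y hy hya
  obtain ⟨t', ht'⟩ := key z hz hza
  have htt : t = t' := by
    have e1 := ht ⟨1, by omega⟩
    have e2 := ht' ⟨1, by omega⟩
    rw [← h1, ← h0] at e2
    simp only [one_mul] at e1 e2
    omega
  funext j
  refine vertex_ext (by rw [hy, hz]) ?_
  rw [ht, ht', htt, h0]

/-! ### Choice of parameters -/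

/-- The size requirement: `1 / δ < B ^ (4 (n + 2)) ≤ B ^ (12 n)` with `B = 2 ^ k`, so
`c = 1 / (144 k)` makes the exponent `c log (1 / δ)` at most `n / 12`. -/
lemma size_bound (k n : ℕ) (hk : 1 ≤ k) (hn : 1 ≤ n) (z : ℝ) (hz1 : 1 ≤ z)
    (hz : z ≤ ((2 ^ k : ℕ) : ℝ) ^ (4 * (n + 2))) :
    z ^ (1 / (144 * (k : ℝ)) * Real.logb 2 z) ≤ (((2 ^ k) ^ (n * (n + 1)) : ℕ) : ℝ) := by
  have hk' : (0 : ℝ) < k := by exact_mod_cast hk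
  have hz2 : z ≤ (2 : ℝ) ^ (12 * n * k : ℕ) := by
    refine hz.trans ?_
    rw [Nat.cast_pow, Nat.cast_ofNat, ← pow_mul]
    refine pow_le_pow_right₀ (by norm_num) ?_
    nlinarith
  have hlog0 : 0 ≤ Real.logb 2 z := Real.logb_nonneg (by norm_num) hz1
  have hlog : Real.logb 2 z ≤ 12 * n * k := by
    rw [Real.logb_le_iff_le_rpow (by norm_num) (by linarith)]
    refine hz2.trans (le_of_eq ?_)
    rw [← Real.rpow_natCast]
    push_cast
    rfl
  have hexp : 1 / (144 * (k : ℝ)) * Real.logb 2 z ≤ n / 12 := by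
    rw [div_mul_eq_mul_div, one_mul, div_le_div_iff₀ (by positivity) (by norm_num)]
    nlinarith
  calc z ^ (1 / (144 * (k : ℝ)) * Real.logb 2 z) ≤ z ^ ((n : ℝ) / 12) :=
        Real.rpow_le_rpow_of_exponent_le hz1 hexp
    _ ≤ ((2 : ℝ) ^ (12 * n * k : ℕ)) ^ ((n : ℝ) / 12) :=
        Real.rpow_le_rpow (by linarith) hz2 (by positivity)
    _ = (2 : ℝ) ^ (n * k * n : ℕ) := by
        rw [← Real.rpow_natCast, ← Real.rpow_natCast, ← Real.rpow_mul (by norm_num)]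
        congr 1
        push_cast
        ring
    _ ≤ (2 : ℝ) ^ (k * (n * (n + 1)) : ℕ) := by
        refine pow_le_pow_right₀ (by norm_num) ?_
        nlinarith
    _ = _ := by
        push_cast
        rw [pow_mul]

/-- the Ruzsa–Szemerédi-type construction, Theorem `RS`. -/
theorem stmt10 (k : ℕ) (hk : 3 ≤ k) :
    ∃ δ₀ c : ℝ, 0 < δ₀ ∧ 0 < c ∧
      ∀ δ : ℝ, 0 < δ → δ < δ₀ →
        ∀ ℓ : ℕ, 3 ≤ ℓ → ℓ ≤ k →
          ∀ idx : Fin ℓ → Fin k, Function.Injective idx →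
            ∃ (N : ℕ) (R : SimpleGraph (Fin N)) (X : Fin k → Finset (Fin N)),
              -- (1) V(R) = X₁ ⊎ … ⊎ X_k and each Xᵢ is independent
              (∀ i j, i ≠ j → Disjoint (X i) (X j)) ∧
              Finset.univ.biUnion X = Finset.univ ∧
              (∀ i, ∀ x ∈ X i, ∀ y ∈ X i, ¬ R.Adj x y) ∧
              -- (2) |V(R)| ≥ (1/δ)^(c·log₂(1/δ))
              (1 / δ) ^ (c * Real.logb 2 (1 / δ)) ≤ (N : ℝ) ∧
              -- (3) E(R) is the union of ≥ δ|V(R)|² pairwise edge-disjoint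
              -- k-cliques, each with one vertex in each Xᵢ
              (∃ 𝒦 : Finset (Fin k → Fin N),
                δ * (N : ℝ) ^ 2 ≤ (𝒦.card : ℝ) ∧
                (∀ f ∈ 𝒦, (∀ i, f i ∈ X i) ∧ ∀ i j, i ≠ j → R.Adj (f i) (f j)) ∧
                (∀ f ∈ 𝒦, ∀ g ∈ 𝒦, f ≠ g →
                  ∀ i j i' j' : Fin k, i ≠ j → i' ≠ j' →
                    ¬ (f i = g i' ∧ f j = g j')) ∧
                (∀ a b, R.Adj a b → ∃ f ∈ 𝒦, ∃ i j, f i = a ∧ f j = b)) ∧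
              -- (4) at most |V(R)|² cycles x_{i₁} x_{i₂} … x_{i_ℓ} x_{i₁}
              (Set.ncard {y : Fin ℓ → Fin N |
                  (∀ j, y j ∈ X (idx j)) ∧ Function.Injective y ∧
                  ∀ j : Fin ℓ, R.Adj (y j) (y (cycSucc j))} : ℝ) ≤ (N : ℝ) ^ 2 := by
  have hB2 : 2 ≤ 2 ^ k := by
    calc 2 = 2 ^ 1 := rfl
      _ ≤ 2 ^ k := Nat.pow_le_pow_right (by norm_num) (by omega)
  have hkB : k ≤ 2 ^ k := Nat.lt_two_pow_self.le
  set B := 2 ^ k with hBdef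
  have hB1 : (1 : ℝ) < B := by exact_mod_cast hB2
  have hBpos : (0 : ℝ) < B := by linarith
  refine ⟨1 / (B : ℝ) ^ 8, 1 / (144 * (k : ℝ)), by positivity, ?_, ?_⟩
  · have : (0 : ℝ) < k := by exact_mod_cast (by omega : 0 < k)
    positivity
  intro δ hδ hδ0 ℓ hℓ hℓk idx hidx
  have hδB : (B : ℝ) ^ 8 < 1 / δ := by
    rw [lt_div_iff₀ hδ]
    rwa [lt_div_iff₀ (by positivity), mul_comm] at hδ0
  have h1δ : 1 ≤ 1 / δ := (one_le_pow₀ hB1.le).trans hδB.le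
  obtain ⟨m, hm1, hm2⟩ := exists_nat_pow_near h1δ (one_lt_pow₀ hB1 (n := 4) (by norm_num))
  -- `δ < B⁻⁸` forces `m ≥ 2`, so the dimension `n = m - 1` is positive.
  have hm : 2 ≤ m := by
    by_contra! hlt
    have : ((B : ℝ) ^ 4) ^ (m + 1) ≤ (B : ℝ) ^ 8 := by
      rw [← pow_mul]
      exact pow_le_pow_right₀ hB1.le (by omega)
    linarith
  obtain ⟨n, rfl⟩ : ∃ n, m = n + 1 := ⟨m - 1, by omega⟩
  have hn : 1 ≤ n := by omega
  obtain ⟨S, hS, hSM, hScard⟩ := exists_meanFree k B n hB2 hkB hn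
  obtain ⟨a, ha⟩ := exists_perm idx hidx
  have hsize := size_bound k n (by omega) hn (1 / δ) h1δ (by rw [pow_mul]; exact hm2.le)
  rw [← hBdef] at hsize
  set M := B ^ (n * (n + 1)) with hM
  let T : Finset (Fin M) := S.attachFin hSM
  have hTS : T.map Fin.valEmbedding = S := Finset.map_valEmbedding_attachFin hSM
  have hTcard : T.card = S.card := Finset.card_attachFin S hSM
  have hadj : ∀ q : Fin M × Fin M, q.2 ∈ T → ∀ i j, i ≠ j →
      (rsGraph a T).Adj (cliqueVertex a q i) (cliqueVertex a q j) :=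
    fun q hq i j hij => ⟨q, hq, i, j, hij, rfl, rfl⟩
  refine ⟨k * (k * M), rsGraph a T, fun i => Finset.univ.filter fun v => vPart v = i,
    ?_, ?_, ?_, ?_, ?_, ?_⟩
  · intro i j hij
    rw [Finset.disjoint_left]
    intro v hv hv'
    simp only [Finset.mem_filter, Finset.mem_univ, true_and] at hv hv'
    exact hij (hv.symm.trans hv')
  · ext v
    simp
  · rintro i x hx y hy ⟨q, _, i', j', hij, rfl, rfl⟩
    simp only [Finset.mem_filter, Finset.mem_univ, true_and, vPart_cliqueVertex] at hx hy
    exact hij (hx.trans hy.symm)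
  · refine hsize.trans ?_
    have : M ≤ k * (k * M) := by
      calc M = 1 * (1 * M) := by ring
        _ ≤ k * (k * M) := by gcongr <;> omega
    exact_mod_cast this
  · have h01 : (⟨0, by omega⟩ : Fin k) ≠ ⟨1, by omega⟩ := by simp
    refine ⟨((Finset.univ : Finset (Fin M)) ×ˢ T).image (cliqueVertex a), ?_, ?_, ?_, ?_⟩
    · rw [Finset.card_image_of_injective _ fun q q' h =>
        cliqueVertex_inj a h01 (congrFun h _) (congrFun h _), Finset.card_product,
        Finset.card_univ, Fintype.card_fin, hTcard]
      have h1 : (M : ℝ) ≤ (B : ℝ) ^ (4 * n) * S.card := by exact_mod_cast hScard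
      have h2 : (k : ℝ) ≤ B := by exact_mod_cast hkB
      have h3 : δ * (B : ℝ) ^ (4 * n + 4) ≤ 1 := by
        rw [← pow_mul, le_div_iff₀ hδ] at hm1
        rw [mul_comm]
        exact hm1
      push_cast
      have hM0 : (0 : ℝ) ≤ M := Nat.cast_nonneg _
      calc δ * ((k : ℝ) * (k * M)) ^ 2 = M * (δ * (k : ℝ) ^ 4 * M) := by ring
        _ ≤ M * (δ * (B : ℝ) ^ 4 * ((B : ℝ) ^ (4 * n) * S.card)) := by gcongr
        _ = M * ((δ * (B : ℝ) ^ (4 * n + 4)) * S.card) := by ring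
        _ ≤ M * (1 * S.card) := by gcongr
        _ = M * S.card := by ring
    · intro f hf
      obtain ⟨q, hq, rfl⟩ := Finset.mem_image.1 hf
      exact ⟨fun i => by simp, hadj q (Finset.mem_product.1 hq).2⟩
    · intro f hf g hg hfg i j i' j' hij _ ⟨h1, h2⟩
      obtain ⟨q, _, rfl⟩ := Finset.mem_image.1 hf
      obtain ⟨q', _, rfl⟩ := Finset.mem_image.1 hg
      exact hfg (congrArg _ (cliqueVertex_inj a hij h1 h2))
    · rintro v w ⟨q, hq, i, j, _, h1, h2⟩
      exact ⟨cliqueVertex a q, Finset.mem_image_of_mem _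
        (Finset.mem_product.2 ⟨Finset.mem_univ _, hq⟩), i, j, h1, h2⟩
  · have h := ncard_cycles_le hℓ hℓk idx a ha T (by rwa [hTS])
    rw [← Nat.cast_pow, Nat.cast_le]
    refine le_trans ?_ h
    refine Set.ncard_le_ncard ?_ (Set.toFinite _)
    intro y hy
    exact ⟨fun j => (Finset.mem_filter.1 (hy.1 j)).2, hy.2.2⟩
end

section
/- Let G₁ and G₂ be a pair of ordered cores. If there is an order-preserving homomorphism from G₁ to G₂ and an order-preserving homomorphism from G₂ to G₁, then there is an order-preserving isomorphism between G₁ and G₂. -/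
/-!
An order-preserving endomorphism `h` of an ordered core `G` fixes every vertex. Indeed, `h` maps `G`
onto the subgraph induced on its image, so minimality makes `h` injective on the vertices; being
monotone it is strictly monotone, and the only strictly monotone self-map of a finite linear order
is the identity (`IsOrderedCore.endo_eq`).

Given homomorphisms `f : G₁ → G₂` and `g : G₂ → G₁`, both `g ∘ f` and `f ∘ g` are such endomorphisms.
Hence `f` and `g` are mutually inverse on vertices, and `f` reflects adjacency because `g` preserves
it, so `f` itself is an isomorphism.
-/


/-- A graph whose vertices are natural numbers (hence linearly ordered), given by a
finite vertex set and an adjacency relation. -/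
structure OrderedGraph where
  verts : Finset ℕ
  Adj : ℕ → ℕ → Prop

/-- Well-formedness: the adjacency relation is symmetric, irreflexive, and supported
on the vertex set. -/
def OrderedGraph.IsGraph (G : OrderedGraph) : Prop :=
  (∀ x y, G.Adj x y → G.Adj y x) ∧ (∀ x, ¬ G.Adj x x) ∧
  (∀ x y, G.Adj x y → x ∈ G.verts ∧ y ∈ G.verts)

/-- `C` is a subgraph of `G` (inheriting its vertex labels). -/
def IsSubgraph (C G : OrderedGraph) : Prop :=
  C.verts ⊆ G.verts ∧ ∀ x y, C.Adj x y → G.Adj x y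

/-- `f` is an order-preserving homomorphism from `G` to `G'`. -/
def OPHom (G G' : OrderedGraph) (f : ℕ → ℕ) : Prop :=
  (∀ x ∈ G.verts, f x ∈ G'.verts) ∧
  (∀ x ∈ G.verts, ∀ y ∈ G.verts, x ≤ y → f x ≤ f y) ∧
  (∀ x y, G.Adj x y → G'.Adj (f x) (f y))

/-- `f` is an order-preserving isomorphism from `G` to `G'`. -/
def OPIso (G G' : OrderedGraph) (f : ℕ → ℕ) : Prop :=
  OPHom G G' f ∧ Set.BijOn f ↑G.verts ↑G'.verts ∧
  ∀ x ∈ G.verts, ∀ y ∈ G.verts, G'.Adj (f x) (f y) → G.Adj x y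

/-- `C` is an ordered core of `G`: a subgraph of `G`, admitting an order-preserving
homomorphism from `G`, of minimum possible number of vertices. -/
def IsOrderedCoreOf (C G : OrderedGraph) : Prop :=
  IsSubgraph C G ∧ (∃ f, OPHom G C f) ∧
  ∀ C' : OrderedGraph, IsSubgraph C' G → (∃ f, OPHom G C' f) →
    C.verts.card ≤ C'.verts.card

/-- `G` is an ordered core if it is the ordered core of itself. -/
def IsOrderedCore (G : OrderedGraph) : Prop := IsOrderedCoreOf G G

theorem OPHom.comp {G G' G'' : OrderedGraph} {f g : ℕ → ℕ} (hg : OPHom G' G'' g)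
    (hf : OPHom G G' f) : OPHom G G'' (g ∘ f) :=
  ⟨fun x hx => hg.1 _ (hf.1 x hx),
    fun x hx y hy hxy => hg.2.1 _ (hf.1 x hx) _ (hf.1 y hy) (hf.2.1 x hx y hy hxy),
    fun x y hxy => hg.2.2 _ _ (hf.2.2 x y hxy)⟩

/-- An endomorphism of an ordered core is injective on vertices: otherwise the subgraph induced on
its image would contradict minimality. -/
theorem IsOrderedCore.endo_injOn {G : OrderedGraph} (hG : G.IsGraph) (hc : IsOrderedCore G)
    {h : ℕ → ℕ} (hh : OPHom G G h) : Set.InjOn h G.verts := by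
  have hle := hc.2.2
    ⟨G.verts.image h, fun x y => G.Adj x y ∧ x ∈ G.verts.image h ∧ y ∈ G.verts.image h⟩
    ⟨Finset.image_subset_iff.2 hh.1, fun _ _ hxy => hxy.1⟩
    ⟨h, fun x hx => Finset.mem_image_of_mem h hx, hh.2.1, fun x y hxy =>
      ⟨hh.2.2 x y hxy, Finset.mem_image_of_mem h (hG.2.2 x y hxy).1,
        Finset.mem_image_of_mem h (hG.2.2 x y hxy).2⟩⟩
  exact Finset.card_image_iff.1 (le_antisymm Finset.card_image_le hle)

/-- An ordered core is rigid: every endomorphism fixes all vertices. -/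
theorem IsOrderedCore.endo_eq {G : OrderedGraph} (hG : G.IsGraph) (hc : IsOrderedCore G)
    {h : ℕ → ℕ} (hh : OPHom G G h) {x : ℕ} (hx : x ∈ G.verts) : h x = x := by
  have hinj := hc.endo_injOn hG hh
  let k : G.verts → G.verts := fun v => ⟨h v, hh.1 v v.2⟩
  have hk : StrictMono k := by
    intro a b hab
    have hab' : (a : ℕ) < b := hab
    have h1 : h a ≤ h b := hh.2.1 a a.2 b b.2 hab'.le
    have h2 : h a ≠ h b := fun he => hab'.ne (hinj a.2 b.2 he)
    exact Subtype.mk_lt_mk.2 (lt_of_le_of_ne h1 h2)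
  -- A finite linear order is well-founded in both directions, so `v ≤ k v` and `k v ≤ v`.
  exact congrArg Subtype.val (le_antisymm (hk.apply_le (x := ⟨x, hx⟩)) hk.le_apply)

/-- two ordered cores with order-preserving homomorphisms both ways
are order-preservingly isomorphic. -/
theorem stmt11 (G₁ G₂ : OrderedGraph) (h₁ : G₁.IsGraph) (h₂ : G₂.IsGraph)
    (hc₁ : IsOrderedCore G₁) (hc₂ : IsOrderedCore G₂)
    (f : ℕ → ℕ) (hf : OPHom G₁ G₂ f) (g : ℕ → ℕ) (hg : OPHom G₂ G₁ g) :
    ∃ e : ℕ → ℕ, OPIso G₁ G₂ e := by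
  have hgf : ∀ x ∈ G₁.verts, g (f x) = x := fun x hx => hc₁.endo_eq h₁ (hg.comp hf) hx
  have hfg : ∀ y ∈ G₂.verts, f (g y) = y := fun y hy => hc₂.endo_eq h₂ (hf.comp hg) hy
  refine ⟨f, hf, Set.InvOn.bijOn ⟨hgf, hfg⟩ hf.1 hg.1, fun x hx y hy hxy => ?_⟩
  have hadj := hg.2.2 _ _ hxy
  rwa [hgf x hx, hgf y hy] at hadj
end

section
/- Let H be an oriented graph on h vertices, and let C(H) be the family of graphs obtained as follows: for each of the h! labelings of V(H) by 1,…,h, take the ordered core of the corresponding backedge graph. Let K be a maximal element of C(H) with respect to the order-preserving-homomorphism preorder, i.e., K ∈ C(H) and for every C ∈ C(H), if there is an order-preserving homomorphism from C to K, then there is an order-preserving isomorphism between C and K. Then for every labeling of V(H) by 1,…,h with corresponding backedge graph G, and for every order-preserving homomorphism f : G → K, there is a subset X ⊆ V(G) such that the restriction f|_X is a graph isomorphism from the induced subgraph G[X] onto K. -/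
/-- The backedge graph of an oriented graph `H` on `Fin h` with respect to the
labeling in which the vertex `σ i` receives the label `(i : ℕ) + 1 ∈ {1,…,h}`:
its vertex set is `{1,…,h}` and labels `x < y` are adjacent iff the `H`-edge between
the vertices labeled `x` and `y` points from the `y`-labeled one to the `x`-labeled
one. -/
def backedgeOG (h : ℕ) (EH : Fin h → Fin h → Prop) (σ : Fin h ≃ Fin h) :
    OrderedGraph where
  verts := Finset.image (fun i : Fin h => (i : ℕ) + 1) Finset.univ
  Adj x y := ∃ i j : Fin h, x = (i : ℕ) + 1 ∧ y = (j : ℕ) + 1 ∧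
    ((i < j ∧ EH (σ j) (σ i)) ∨ (j < i ∧ EH (σ i) (σ j)))

/-- The family `C(H)`: the ordered cores of the backedge graphs of `H` over all
labelings of `V(H)`. -/
def coreFamily (h : ℕ) (EH : Fin h → Fin h → Prop) : Set OrderedGraph :=
  {C | ∃ σ : Fin h ≃ Fin h, IsOrderedCoreOf C (backedgeOG h EH σ)}

/-- A monotone injective self-map of a finite set of naturals is the identity. -/
lemma eq_self_of_monotone_injOn (S : Finset ℕ) (e : ℕ → ℕ) (hmaps : ∀ x ∈ S, e x ∈ S)
    (hmono : ∀ x ∈ S, ∀ y ∈ S, x ≤ y → e x ≤ e y) (hinj : Set.InjOn e (S : Set ℕ)) :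
    ∀ x ∈ S, e x = x := by
  have hsurj : Finset.image e S = S :=
    Finset.eq_of_subset_of_card_le (Finset.image_subset_iff.2 hmaps)
      (Finset.card_image_of_injOn hinj).ge
  intro x
  induction x using Nat.strong_induction_on with
  | _ x ih =>
    intro hx
    -- A preimage `z` of `x` satisfies `x ≤ z`, as smaller elements are fixed; hence `e x ≤ x`.
    obtain ⟨z, hz, hzx⟩ := Finset.mem_image.1 (hsurj.symm ▸ hx)
    have hxz : x ≤ z := by
      by_contra! hlt
      have := ih z hlt hz
      omega
    have hle : e x ≤ x := hzx ▸ hmono x hx z hz hxz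
    rcases hle.lt_or_eq with hlt | heq
    · exact hinj (hmaps x hx) hx (ih _ hlt (hmaps x hx))
    · exact heq

/-- Rigidity of ordered cores. Adjacency only needs to be preserved by `e` between vertices of
`C`, since the relation `C.Adj` may also hold outside `C.verts`. -/
lemma IsOrderedCoreOf.eq_self {C G : OrderedGraph} (hC : IsOrderedCoreOf C G)
    (hG : ∀ x y, G.Adj x y → x ∈ G.verts ∧ y ∈ G.verts) (e : ℕ → ℕ)
    (hmaps : ∀ x ∈ C.verts, e x ∈ C.verts)
    (hmono : ∀ x ∈ C.verts, ∀ y ∈ C.verts, x ≤ y → e x ≤ e y)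
    (hadj : ∀ x ∈ C.verts, ∀ y ∈ C.verts, C.Adj x y → C.Adj (e x) (e y)) :
    ∀ x ∈ C.verts, e x = x := by
  obtain ⟨⟨hsub, hsubAdj⟩, ⟨r, hr₁, hr₂, hr₃⟩, hmin⟩ := hC
  refine eq_self_of_monotone_injOn _ e hmaps hmono ?_
  have hcard : C.verts.card ≤ (Finset.image e C.verts).card := by
    refine hmin ⟨Finset.image e C.verts, C.Adj⟩ ⟨?_, hsubAdj⟩ ⟨e ∘ r, ?_, ?_, ?_⟩
    · exact (Finset.image_subset_iff.2 hmaps).trans hsub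
    · exact fun x hx => Finset.mem_image_of_mem e (hr₁ x hx)
    · exact fun x hx y hy hxy => hmono _ (hr₁ x hx) _ (hr₁ y hy) (hr₂ x hx y hy hxy)
    · exact fun x y hxy => hadj _ (hr₁ x (hG x y hxy).1) _ (hr₁ y (hG x y hxy).2) (hr₃ x y hxy)
  exact Finset.card_image_iff.1 (le_antisymm Finset.card_image_le hcard)

lemma exists_isOrderedCoreOf (G : OrderedGraph) : ∃ C, IsOrderedCoreOf C G := by
  have hne : {C : OrderedGraph | IsSubgraph C G ∧ ∃ f, OPHom G C f}.Nonempty :=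
    ⟨G, ⟨subset_rfl, fun _ _ h => h⟩, id, fun _ h => h, fun _ _ _ _ h => h, fun _ _ h => h⟩
  obtain ⟨C, hC, hmin⟩ :=
    (measure fun C : OrderedGraph => C.verts.card).wf.has_min _ hne
  exact ⟨C, hC.1, hC.2, fun C' h₁ h₂ => not_lt.1 (hmin C' ⟨h₁, h₂⟩)⟩

lemma backedgeOG_mem_verts (h : ℕ) (EH : Fin h → Fin h → Prop) (σ : Fin h ≃ Fin h) (x y : ℕ)
    (hxy : (backedgeOG h EH σ).Adj x y) :
    x ∈ (backedgeOG h EH σ).verts ∧ y ∈ (backedgeOG h EH σ).verts := by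
  obtain ⟨i, j, rfl, rfl, -⟩ := hxy
  exact ⟨Finset.mem_image_of_mem _ (Finset.mem_univ i),
    Finset.mem_image_of_mem _ (Finset.mem_univ j)⟩

/-- Proposition `core`. -/
theorem stmt14 (h : ℕ) (EH : Fin h → Fin h → Prop) (hH : IsOrientedGraph EH)
    (K : OrderedGraph) (hKmem : K ∈ coreFamily h EH)
    (hKmax : ∀ C ∈ coreFamily h EH, (∃ f, OPHom C K f) → ∃ g, OPIso C K g) :
    ∀ σ : Fin h ≃ Fin h, ∀ f : ℕ → ℕ, OPHom (backedgeOG h EH σ) K f →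
      ∃ X : Finset ℕ, X ⊆ (backedgeOG h EH σ).verts ∧
        Set.BijOn f ↑X ↑K.verts ∧
        ∀ x ∈ X, ∀ y ∈ X, ((backedgeOG h EH σ).Adj x y ↔ K.Adj (f x) (f y)) := by
  intro σ f hf
  obtain ⟨C, hC⟩ := exists_isOrderedCoreOf (backedgeOG h EH σ)
  obtain ⟨τ, hK⟩ := hKmem
  have hGσ := backedgeOG_mem_verts h EH σ
  have hfC : OPHom C K f :=
    ⟨fun x hx => hf.1 x (hC.1.1 hx), fun x hx y hy => hf.2.1 x (hC.1.1 hx) y (hC.1.1 hy),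
      fun x y hxy => hf.2.2 x y (hC.1.2 x y hxy)⟩
  obtain ⟨g, ⟨-, hg_mono, hg_adj⟩, hg_bij, hg_refl⟩ := hKmax C ⟨σ, hC⟩ ⟨f, hfC⟩
  have hinv : ∀ k ∈ K.verts, ∃ c ∈ C.verts, g c = k := fun k hk => hg_bij.surjOn hk
  choose! u hu hgu using hinv
  have hid : ∀ k ∈ K.verts, f (u k) = k := by
    refine hK.eq_self (backedgeOG_mem_verts h EH τ) (fun k => f (u k))
      (fun k hk => hfC.1 _ (hu k hk)) (fun k hk l hl hkl => ?_) (fun k hk l hl hkl => ?_)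
    · refine hfC.2.1 _ (hu k hk) _ (hu l hl) ?_
      by_contra! hlt
      have hlk := hg_mono _ (hu l hl) _ (hu k hk) hlt.le
      rw [hgu k hk, hgu l hl] at hlk
      obtain rfl := le_antisymm hkl hlk
      exact lt_irrefl _ hlt
    · refine hfC.2.2 _ _ (hg_refl _ (hu k hk) _ (hu l hl) ?_)
      rwa [hgu k hk, hgu l hl]
  have hfg : ∀ x ∈ C.verts, f x = g x := by
    intro x hx
    have hgx : g x ∈ K.verts := hg_bij.mapsTo hx
    have hux : u (g x) = x := hg_bij.injOn (hu _ hgx) hx (hgu _ hgx)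
    have h := hid _ hgx
    rwa [hux] at h
  refine ⟨C.verts, hC.1.1, hg_bij.congr fun x hx => (hfg x hx).symm, fun x hx y hy =>
    ⟨hf.2.2 x y, fun hxy => hC.1.2 x y (hg_refl x hx y hy ?_)⟩⟩
  rwa [← hfg x hx, ← hfg y hy]
end

section
/- Let H be the tournament on the seven vertices {u, v, w, a, b, c, d} with edges: u→v, u→w, w→v, u→c, u→d, v→c, v→d, a→u, b→u, a→v, b→v, a→b, c→d, c→a, c→b, d→a, d→b, w→a, b→w, w→c, d→w. Then: (1) H has a proper 2-coloring in which u and v have the same color and all four vertices a, b, c, d (i.e., all vertices in N⁻(u) ∪ N⁺(v)) have the other color; (2) in every proper 2-coloring of H, the vertices u and v have the same color. -/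
/-- The gadget tournament `H` on seven vertices
`u = 0, v = 1, w = 2, a = 3, b = 4, c = 5, d = 6`, with the edges
u→v, u→w, w→v, u→c, u→d, v→c, v→d, a→u, b→u, a→v, b→v, a→b, c→d, c→a, c→b, d→a,
d→b, w→a, b→w, w→c, d→w. -/
def gadgetE : Fin 7 → Fin 7 → Prop := fun x y =>
  (x, y) ∈ ({(0, 1), (0, 2), (2, 1), (0, 5), (0, 6), (1, 5), (1, 6), (3, 0),
    (4, 0), (3, 1), (4, 1), (3, 4), (5, 6), (5, 3), (5, 4), (6, 3), (6, 4),
    (2, 3), (4, 2), (2, 5), (6, 2)} : Set (Fin 7 × Fin 7))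

/-- A ranking that strictly increases along every edge inside `S` witnesses acyclicity. -/
theorem acyclicOn_of_rank {V : Type*} {E : V → V → Prop} {S : Set V} (r : V → ℕ)
    (h : ∀ x y, x ∈ S → y ∈ S → E x y → r x < r y) : AcyclicOn E S := by
  have key : ∀ x y, Relation.TransGen (fun a b => a ∈ S ∧ b ∈ S ∧ E a b) x y → r x < r y := by
    intro x y hxy
    induction hxy with
    | single e => exact h _ _ e.1 e.2.1 e.2.2
    | tail _ e ih => exact ih.trans (h _ _ e.1 e.2.1 e.2.2)
  exact fun x hx => lt_irrefl _ (key x x hx)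

theorem no_mono_triangle {V C : Type*} {E : V → V → Prop} {χ : V → C}
    (h : ∀ i, AcyclicOn E {v | χ v = i}) {x y z : V} (hxy : E x y) (hyz : E y z) (hzx : E z x) :
    ¬ (χ x = χ y ∧ χ x = χ z) := by
  rintro ⟨h1, h2⟩
  exact h (χ x) x (((Relation.TransGen.single ⟨rfl, h1.symm, hxy⟩).tail
    ⟨h1.symm, h2.symm, hyz⟩).tail ⟨h2.symm, rfl, hzx⟩)

instance : DecidableRel gadgetE := fun x y => by
  unfold gadgetE
  simp only [Set.mem_insert_iff, Set.mem_singleton_iff]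
  infer_instance

/-- Proposition `gadget`: (1) the gadget has a proper 2-coloring in
which `u` and `v` get the same color and all of `N⁻(u) ∪ N⁺(v)` get the other
color; (2) every proper 2-coloring gives `u` and `v` the same color. -/
theorem stmt16 :
    (∃ χ : Fin 7 → Fin 2,
      (∀ i : Fin 2, AcyclicOn gadgetE {v | χ v = i}) ∧
      χ 0 = χ 1 ∧
      ∀ x : Fin 7, (gadgetE x 0 ∨ gadgetE 1 x) → χ x ≠ χ 0) ∧
    (∀ χ : Fin 7 → Fin 2,
      (∀ i : Fin 2, AcyclicOn gadgetE {v | χ v = i}) → χ 0 = χ 1) := by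
  constructor
  · refine ⟨![0, 0, 0, 1, 1, 1, 1], fun i => ?_, rfl, by decide⟩
    -- The positions in the orders `u, w, v` and `c, d, a, b`.
    refine acyclicOn_of_rank ![0, 2, 1, 2, 3, 0, 1] ?_
    simp only [Set.mem_ofPred_eq]
    revert i
    decide
  · intro χ h
    have uca := no_mono_triangle h (x := 0) (y := 5) (z := 3) (by decide) (by decide) (by decide)
    have ucb := no_mono_triangle h (x := 0) (y := 5) (z := 4) (by decide) (by decide) (by decide)
    have uda := no_mono_triangle h (x := 0) (y := 6) (z := 3) (by decide) (by decide) (by decide)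
    have udb := no_mono_triangle h (x := 0) (y := 6) (z := 4) (by decide) (by decide) (by decide)
    have vca := no_mono_triangle h (x := 1) (y := 5) (z := 3) (by decide) (by decide) (by decide)
    have vcb := no_mono_triangle h (x := 1) (y := 5) (z := 4) (by decide) (by decide) (by decide)
    have vda := no_mono_triangle h (x := 1) (y := 6) (z := 3) (by decide) (by decide) (by decide)
    have vdb := no_mono_triangle h (x := 1) (y := 6) (z := 4) (by decide) (by decide) (by decide)
    have wab := no_mono_triangle h (x := 2) (y := 3) (z := 4) (by decide) (by decide) (by decide)
    have wcd := no_mono_triangle h (x := 2) (y := 5) (z := 6) (by decide) (by decide) (by decide)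
    omega
end
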